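/- arXiv:1802.02499 — 13 statements merged into one kernel-verified Lean document; each statement's English description precedes it below -/
import Mathlib

section
/- Let (X,d,μ) be a coarse median space with parameters (ρ,κ₄,κ₅). Then the induced interval map I : X×X → P(X), (a,b) ↦ [a,b] = {μ(a,x,b) : x ∈ X}, satisfies: (I1) [a,a] = {a} and [a,b] = [b,a] for all a,b ∈ X; (I2) there is a non-decreasing function φ : ℝ≥0 → ℝ≥0 (one may take φ(R) = ρ(R)+κ₄) such that whenever c lies in the closed R-neighbourhood N_R([a,b]), one has [a,c] ⊆ N_{φ(R)}([a,b]); and (I3) there is a non-decreasing function ψ : ℝ≥0 → ℝ≥0 such that [a,b] ∩ [b,c] ∩ [c,a] ≠ ∅ for all a,b,c ∈ X and diam(N_R([a,b]) ∩ N_R([b,c]) ∩ N_R([c,a])) ≤ ψ(R) for all R ≥ 0. -/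
/-- The interval `[a,b]` associated to a ternary operator `μ`:
the set `{μ a x b : x ∈ X}`. -/
def cmInterval {X : Type*} (μ : X → X → X → X) (a b : X) : Set X :=
  {c | ∃ x, c = μ a x b}

/-- The closed `R`-neighbourhood of a set `A`. -/
def cmNbhd {X : Type*} [MetricSpace X] (R : ℝ) (A : Set X) : Set X :=
  {x | ∃ a ∈ A, dist x a ≤ R}

/-- A coarse median space with parameters `(ρ, κ₄, κ₅)`. -/
structure IsCoarseMedian {X : Type*} [MetricSpace X] (μ : X → X → X → X)
    (ρ : ℝ → ℝ) (κ₄ κ₅ : ℝ) : Prop where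
  M1 : ∀ a b : X, μ a a b = a
  M2₁ : ∀ a b c : X, μ a b c = μ a c b
  M2₂ : ∀ a b c : X, μ a b c = μ b a c
  ρ_mono : Monotone ρ
  C1 : ∀ a a' b b' c c' : X,
    dist (μ a b c) (μ a' b' c') ≤ ρ (dist a a' + dist b b' + dist c c')
  C2 : ∀ a b c d : X, dist (μ (μ a b c) b d) (μ a b (μ c b d)) ≤ κ₄
  C5 : ∀ a b c d e : X,
    dist (μ a b (μ c d e)) (μ (μ a b c) (μ a b d) e) ≤ κ₅

section CMAux
variable {X : Type*} [MetricSpace X] {μ : X → X → X → X} {ρ : ℝ → ℝ} {κ₄ κ₅ : ℝ}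

lemma cm_near (h : IsCoarseMedian μ ρ κ₄ κ₅) {R : ℝ} {a b x : X}
    (hx : x ∈ cmNbhd R (cmInterval μ a b)) : dist x (μ a b x) ≤ R + κ₄ + ρ R := by
  obtain ⟨p, ⟨z, rfl⟩, hp⟩ := hx
  have h1 := h.C2 z b a a
  have e1 : μ z b (μ a b a) = μ a z b := by
    rw [h.M2₁ a b a, h.M1, h.M2₁, h.M2₂, h.M2₁ a z b, h.M2₁ a b z]
  have e2 : μ (μ z b a) b a = μ a b (μ a z b) := by
    have : μ z b a = μ a z b := by rw [h.M2₁ z b a, h.M2₂ z a b]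
    rw [this, h.M2₂, h.M2₁, h.M2₂ b a, ]
  rw [e1, e2, dist_comm] at h1
  have h2 := h.C1 a a b b (μ a z b) x
  have h3 : ρ (dist a a + dist b b + dist (μ a z b) x) ≤ ρ R :=
    h.ρ_mono (by simpa [dist_comm] using hp)
  have h4 := dist_triangle4 x (μ a z b) (μ a b (μ a z b)) (μ a b x)
  linarith

lemma cm_step (h : IsCoarseMedian μ ρ κ₄ κ₅) {K : ℝ} {a b c x : X}
    (h1 : dist x (μ a b x) ≤ K) (h2 : dist x (μ c a x) ≤ K) :
    dist x (μ (μ a b c) x a) ≤ 2 * ρ K + K + κ₅ := by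
  have h5 := h.C5 a b c x a
  rw [h.M2₁ c x a] at h5
  have h3 := h.C1 a a b b x (μ c a x)
  have h4 := h.C1 (μ a b c) (μ a b c) (μ a b x) x a a
  have h6 : ρ (dist a a + dist b b + dist x (μ c a x)) ≤ ρ K :=
    h.ρ_mono (by simpa using h2)
  have h7 : ρ (dist (μ a b c) (μ a b c) + dist (μ a b x) x + dist a a) ≤ ρ K :=
    h.ρ_mono (by simpa [dist_comm] using h1)
  have t1 := dist_triangle4 x (μ a b x) (μ a b (μ c a x)) (μ (μ a b c) (μ a b x) a)
  have t2 := dist_triangle x (μ (μ a b c) (μ a b x) a) (μ (μ a b c) x a)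
  linarith

lemma cm_center (h : IsCoarseMedian μ ρ κ₄ κ₅) {K : ℝ} {a b c x : X}
    (h1 : dist x (μ a b x) ≤ K) (h2 : dist x (μ b c x) ≤ K) (h3 : dist x (μ c a x) ≤ K) :
    dist (μ a b c) x ≤ κ₅ + ρ (2 * (2 * ρ K + K + κ₅)) := by
  have sa := cm_step h h1 h3
  have sb := cm_step h (a := b) (b := a) (c := c) (x := x) (K := K)
    (by rwa [h.M2₂]) (by rwa [h.M2₂])
  rw [h.M2₂ b a c] at sb
  have h5 := h.C5 (μ a b c) x a b c
  have e : μ (μ a b c) x (μ a b c) = μ a b c := by rw [h.M2₁, h.M1]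
  rw [e] at h5
  have h6 := h.C1 (μ (μ a b c) x a) x (μ (μ a b c) x b) x c c
  rw [h.M1] at h6
  have h7 : ρ (dist (μ (μ a b c) x a) x + dist (μ (μ a b c) x b) x + dist c c)
      ≤ ρ (2 * (2 * ρ K + K + κ₅)) := by
    apply h.ρ_mono
    rw [dist_self, dist_comm _ x, dist_comm _ x]
    linarith
  have t := dist_triangle (μ a b c) (μ (μ (μ a b c) x a) (μ (μ a b c) x b) c) x
  linarith

end CMAux

/-- in a coarse median space, the induced interval map satisfies the
axioms (I1), (I2), (I3) of a coarse interval space, where in (I2) one may take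
`φ R = ρ R + κ₄`. -/
theorem stmt0 {X : Type*} [MetricSpace X] (μ : X → X → X → X)
    (ρ : ℝ → ℝ) (κ₄ κ₅ : ℝ) (h : IsCoarseMedian μ ρ κ₄ κ₅) :
    (∀ a : X, cmInterval μ a a = {a}) ∧
    (∀ a b : X, cmInterval μ a b = cmInterval μ b a) ∧
    (∃ φ : ℝ → ℝ, Monotone φ ∧ φ = (fun R => ρ R + κ₄) ∧
      ∀ (R : ℝ) (a b c : X), c ∈ cmNbhd R (cmInterval μ a b) →
        cmInterval μ a c ⊆ cmNbhd (φ R) (cmInterval μ a b)) ∧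
    (∃ ψ : ℝ → ℝ, Monotone ψ ∧
      (∀ a b c : X,
        (cmInterval μ a b ∩ cmInterval μ b c ∩ cmInterval μ c a).Nonempty) ∧
      (∀ (R : ℝ) (a b c x y : X),
        x ∈ cmNbhd R (cmInterval μ a b) ∩ cmNbhd R (cmInterval μ b c) ∩
            cmNbhd R (cmInterval μ c a) →
        y ∈ cmNbhd R (cmInterval μ a b) ∩ cmNbhd R (cmInterval μ b c) ∩
            cmNbhd R (cmInterval μ c a) →
        dist x y ≤ ψ R)) := by
  refine ⟨?_, ?_, ⟨fun R => ρ R + κ₄, ?_, rfl, ?_⟩,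
    ⟨fun R => 2 * (κ₅ + ρ (2 * (2 * ρ (R + κ₄ + ρ R) + (R + κ₄ + ρ R) + κ₅))), ?_, ?_, ?_⟩⟩
  · intro a
    ext c
    constructor
    · rintro ⟨x, rfl⟩
      rw [h.M2₁, h.M1]; rfl
    · rintro rfl
      exact ⟨c, (h.M1 _ _).symm⟩
  · have key : ∀ a x b : X, μ a x b = μ b x a := fun a x b => by
      rw [h.M2₁, h.M2₂, h.M2₁]
    intro a b
    ext c
    constructor
    · rintro ⟨x, rfl⟩; exact ⟨x, key _ _ _⟩
    · rintro ⟨x, rfl⟩; exact ⟨x, key _ _ _⟩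
  · intro R S hRS
    have := h.ρ_mono hRS
    simpa using this
  · rintro R a b c ⟨_, ⟨z, rfl⟩, hp⟩ _ ⟨x, rfl⟩
    refine ⟨μ a (μ x a z) b, ⟨_, rfl⟩, ?_⟩
    have h1 := h.C2 x a z b
    have h2 := h.C1 a a x x c (μ a z b)
    have h3 : ρ (dist a a + dist x x + dist c (μ a z b)) ≤ ρ R :=
      h.ρ_mono (by simpa using hp)
    rw [h.M2₂ (μ x a z) a b, h.M2₂ x a (μ z a b), h.M2₂ z a b, dist_comm] at h1
    have t := dist_triangle (μ a x c) (μ a x (μ a z b)) (μ a (μ x a z) b)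
    show _ ≤ ρ R + κ₄
    linarith
  · intro R S hRS
    have h1 := h.ρ_mono hRS
    have h2 : R + κ₄ + ρ R ≤ S + κ₄ + ρ S := by linarith
    have h3 := h.ρ_mono h2
    have h4 := h.ρ_mono (show 2 * (2 * ρ (R + κ₄ + ρ R) + (R + κ₄ + ρ R) + κ₅) ≤
      2 * (2 * ρ (S + κ₄ + ρ S) + (S + κ₄ + ρ S) + κ₅) by linarith)
    show 2 * (κ₅ + _) ≤ 2 * (κ₅ + _)
    linarith
  · intro a b c
    refine ⟨μ a b c, ⟨⟨c, h.M2₁ _ _ _⟩, ⟨a, h.M2₂ _ _ _⟩⟩, ⟨b, ?_⟩⟩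
    rw [h.M2₂, h.M2₁, h.M2₂]
  · rintro R a b c x y ⟨⟨x1, x2⟩, x3⟩ ⟨⟨y1, y2⟩, y3⟩
    have hx := cm_center h (cm_near h x1) (cm_near h x2) (cm_near h x3)
    have hy := cm_center h (cm_near h y1) (cm_near h y2) (cm_near h y3)
    have t := dist_triangle_left x y (μ a b c)
    show _ ≤ 2 * (κ₅ + _)
    linarith
end

section
/- Let (X,d,I) be a coarse interval space with parameters (φ,ψ) and let μ be an induced operator of I. Then for all a,a',b,c ∈ X, d(μ(a,b,c), μ(a',b,c)) ≤ ψ(φ(d(a,a'))). In particular μ satisfies the uniform bornology axiom (C1) with control function ρ = ψ∘φ. -/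
/-- A coarse interval space with parameters `(φ, ψ)`. -/
structure IsCoarseIntervalSpace {X : Type*} [MetricSpace X]
    (I : X → X → Set X) (φ ψ : ℝ → ℝ) : Prop where
  I1a : ∀ a : X, I a a = {a}
  I1b : ∀ a b : X, I a b = I b a
  φ_mono : Monotone φ
  I2 : ∀ (R : ℝ) (a b c : X), c ∈ cmNbhd R (I a b) →
    I a c ⊆ cmNbhd (φ R) (I a b)
  ψ_mono : Monotone ψ
  I3ne : ∀ a b c : X, (I a b ∩ I b c ∩ I c a).Nonempty
  I3diam : ∀ (R : ℝ) (a b c x y : X),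
    x ∈ cmNbhd R (I a b) ∩ cmNbhd R (I b c) ∩ cmNbhd R (I c a) →
    y ∈ cmNbhd R (I a b) ∩ cmNbhd R (I b c) ∩ cmNbhd R (I c a) →
    dist x y ≤ ψ R

/-- An induced (ternary) operator of an interval map `I` : for all `a b c`,
`μ a b c` lies in `[a,b] ∩ [b,c] ∩ [c,a]` and is invariant under permutations. -/
def IsInducedOperator {X : Type*} (I : X → X → Set X) (μ : X → X → X → X) : Prop :=
  (∀ a b c : X, μ a b c ∈ I a b ∩ I b c ∩ I c a) ∧
  (∀ a b c : X, μ a b c = μ a c b) ∧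
  (∀ a b c : X, μ a b c = μ b a c)

/-- for a coarse interval space with parameters `(φ, ψ)` and an
induced operator `μ`, we have `d(μ(a,b,c), μ(a',b,c)) ≤ ψ(φ(d(a,a')))`; in
particular axiom (C1) holds for `μ` with control function `ρ = ψ ∘ φ`. -/
theorem stmt1 {X : Type*} [MetricSpace X] (I : X → X → Set X) (φ ψ : ℝ → ℝ)
    (μ : X → X → X → X) (hI : IsCoarseIntervalSpace I φ ψ)
    (hμ : IsInducedOperator I μ) :
    ∀ a a' b c : X, dist (μ a b c) (μ a' b c) ≤ ψ (φ (dist a a')) := by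
  intro a a' b c
  have hend : ∀ x y : X, x ∈ I y x := by
    intro x y
    obtain ⟨z, ⟨hz1, hz2⟩, _⟩ := hI.I3ne x x y
    rw [hI.I1a] at hz1
    have hzx : z = x := hz1
    rw [hzx, hI.I1b] at hz2
    exact hz2
  have hsub : ∀ y : X, I y a' ⊆ cmNbhd (φ (dist a a')) (I y a) := fun y =>
    hI.I2 _ y a a' ⟨a, hend a y, (dist_comm a' a).le⟩
  obtain ⟨⟨h1, h2⟩, h3⟩ := hμ.1 a b c
  obtain ⟨⟨k1, k2⟩, k3⟩ := hμ.1 a' b c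
  have hb := hsub b (by rw [hI.I1b]; exact k1)
  have hc := hsub c k3
  have h0 : 0 ≤ φ (dist a a') := by
    obtain ⟨z, _, hz⟩ := hc
    exact dist_nonneg.trans hz
  have hself : ∀ (A : Set X) (x : X), x ∈ A → x ∈ cmNbhd (φ (dist a a')) A :=
    fun A x hx => ⟨x, hx, by rw [dist_self]; exact h0⟩
  refine hI.I3diam _ a b c _ _ ⟨⟨hself _ _ h1, hself _ _ h2⟩, hself _ _ h3⟩
    ⟨⟨?_, hself _ _ k2⟩, hc⟩
  rw [hI.I1b]
  exact hb
end

section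
/- Let (X,d,I) be a coarse interval space with parameters (φ,ψ), and set h(R₁,R₂) = ψ(R₂) + ψ(φ(R₁ + φ(R₂))). If b ∈ N_{R₁}([a,c]) and c ∈ N_{R₂}([a,d]), then c ∈ N_{h(R₁,R₂)}([b,d]). -/
/-- in a coarse interval space with parameters `(φ, ψ)`, with
`h R₁ R₂ = ψ R₂ + ψ (φ (R₁ + φ R₂))`: if `b ∈ N_{R₁}([a,c])` and
`c ∈ N_{R₂}([a,d])`, then `c ∈ N_{h(R₁,R₂)}([b,d])`. -/
theorem stmt2 {X : Type*} [MetricSpace X] (I : X → X → Set X) (φ ψ : ℝ → ℝ)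
    (hI : IsCoarseIntervalSpace I φ ψ) :
    ∀ (R₁ R₂ : ℝ) (a b c d : X),
      b ∈ cmNbhd R₁ (I a c) → c ∈ cmNbhd R₂ (I a d) →
      c ∈ cmNbhd (ψ R₂ + ψ (φ (R₁ + φ R₂))) (I b d) := by
  intro R₁ R₂ a b c d hb hc
  have left_mem : ∀ x y : X, x ∈ I x y := by
    intro x y
    obtain ⟨z, ⟨hz1, hz2⟩, hz3⟩ := hI.I3ne x x y
    rw [hI.I1a] at hz1
    have : z = x := hz1
    rwa [this] at hz2
  have right_mem : ∀ x y : X, y ∈ I x y := by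
    intro x y
    rw [hI.I1b]
    exact left_mem y x
  have sub_nbhd : ∀ (R : ℝ) (A : Set X) (x : X), 0 ≤ R → x ∈ A → x ∈ cmNbhd R A := by
    intro R A x hR hx
    exact ⟨x, hx, by simpa using hR⟩
  have nonneg : ∀ (R : ℝ) (A : Set X) (x : X), x ∈ cmNbhd R A → 0 ≤ R := by
    rintro R A x ⟨y, _, hy⟩
    exact dist_nonneg.trans hy
  have mono : ∀ (R S : ℝ) (A : Set X) (x : X), R ≤ S → x ∈ cmNbhd R A → x ∈ cmNbhd S A := by
    rintro R S A x h ⟨y, hyA, hy⟩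
    exact ⟨y, hyA, hy.trans h⟩
  have hR2 := nonneg _ _ _ hc
  have hφ2 : 0 ≤ φ R₂ := nonneg _ _ _ (hI.I2 R₂ a d c hc (left_mem a c))
  -- `b` is close to `[a,d]`
  have hbd : b ∈ cmNbhd (R₁ + φ R₂) (I d a) := by
    obtain ⟨p, hp, hbp⟩ := hb
    obtain ⟨q, hq, hpq⟩ := hI.I2 R₂ a d c hc hp
    rw [hI.I1b d a]
    exact ⟨q, hq, (dist_triangle b p q).trans (add_le_add hbp hpq)⟩
  have hsub := hI.I2 _ d a b hbd
  have hK : 0 ≤ φ (R₁ + φ R₂) := nonneg _ _ _ (hsub (left_mem d b))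
  have hb' : b ∈ cmNbhd R₁ (I c a) := by rwa [hI.I1b c a]
  have hsub1 := hI.I2 R₁ c a b hb'
  obtain ⟨m, ⟨hm1, hm2⟩, hm3⟩ := hI.I3ne b c d
  obtain ⟨n, ⟨hn1, hn2⟩, hn3⟩ := hI.I3ne a c d
  have h1 : dist c n ≤ ψ R₂ := by
    apply hI.I3diam R₂ a c d
    · refine ⟨⟨sub_nbhd _ _ _ hR2 (right_mem a c), sub_nbhd _ _ _ hR2 (left_mem c d)⟩, ?_⟩
      rwa [hI.I1b d a]
    · exact ⟨⟨sub_nbhd _ _ _ hR2 hn1, sub_nbhd _ _ _ hR2 hn2⟩, sub_nbhd _ _ _ hR2 hn3⟩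
  have h2 : dist n m ≤ ψ (φ (R₁ + φ R₂)) := by
    apply hI.I3diam _ a c d
    · exact ⟨⟨sub_nbhd _ _ _ hK hn1, sub_nbhd _ _ _ hK hn2⟩, sub_nbhd _ _ _ hK hn3⟩
    · refine ⟨⟨?_, sub_nbhd _ _ _ hK hm2⟩, hsub hm3⟩
      rw [hI.I1b a c]
      rw [hI.I1b b c] at hm1
      exact mono _ _ _ _ (hI.φ_mono (by linarith)) (hsub1 hm1)
  rw [hI.I1b d b] at hm3
  exact ⟨m, hm3, (dist_triangle c n m).trans (add_le_add h1 h2)⟩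
end

section
/- Let (X,d,I) be a coarse interval space with parameters (φ,ψ), and set h(R₁,R₂) = ψ(R₂) + ψ(φ(R₁ + φ(R₂))). If the Hausdorff distance between [a,b] and [a,c] is at most R, then d(b,c) ≤ h(R,R). -/
/-- in a coarse interval space with parameters `(φ, ψ)`, with
`h R₁ R₂ = ψ R₂ + ψ (φ (R₁ + φ R₂))`: if the Hausdorff distance between
`[a,b]` and `[a,c]` is at most `R` (i.e. each is contained in the closed
`R`-neighbourhood of the other), then `d(b,c) ≤ h(R,R)`. -/
theorem stmt3 {X : Type*} [MetricSpace X] (I : X → X → Set X) (φ ψ : ℝ → ℝ)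
    (hI : IsCoarseIntervalSpace I φ ψ) :
    ∀ (R : ℝ) (a b c : X),
      I a b ⊆ cmNbhd R (I a c) → I a c ⊆ cmNbhd R (I a b) →
      dist b c ≤ ψ R + ψ (φ (R + φ R)) := by
  intro R a b c h1 h2
  have right : ∀ x y : X, y ∈ I x y := by
    intro x y
    obtain ⟨z, ⟨hz1, hz2⟩, _⟩ := hI.I3ne x y y
    rw [hI.I1a] at hz2
    have hz : z = y := hz2
    rwa [hz] at hz1
  have left : ∀ x y : X, x ∈ I x y := by
    intro x y
    rw [hI.I1b]
    exact right y x
  have self : ∀ (r : ℝ) (A : Set X) (x : X), 0 ≤ r → x ∈ A → x ∈ cmNbhd r A := by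
    intro r A x hr hx
    exact ⟨x, hx, by simpa using hr⟩
  have hR : 0 ≤ R := by
    obtain ⟨z, _, hz⟩ := h1 (left a b)
    exact dist_nonneg.trans hz
  have hφ : ∀ r : ℝ, 0 ≤ r → 0 ≤ φ r := by
    intro r hr
    obtain ⟨z, _, hz⟩ := hI.I2 r a a a (self r _ a hr (left a a)) (left a a)
    exact dist_nonneg.trans hz
  have hψ : ∀ r : ℝ, 0 ≤ r → 0 ≤ ψ r := by
    intro r hr
    have hm := self r _ a hr (left a a)
    exact dist_nonneg.trans (hI.I3diam r a a a a a ⟨⟨hm, hm⟩, hm⟩ ⟨⟨hm, hm⟩, hm⟩)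
  have hbc : dist b c ≤ ψ R := by
    apply hI.I3diam R a b c b c
    · refine ⟨⟨self R _ b hR (right a b), self R _ b hR (left b c)⟩, ?_⟩
      rw [hI.I1b c a]
      exact h1 (right a b)
    · exact ⟨⟨h2 (right a c), self R _ c hR (right b c)⟩, self R _ c hR (left c a)⟩
  have h3 := hψ _ (hφ _ (add_nonneg hR (hφ R hR)))
  linarith
end

section
/- Let (X,d,I) be a coarse interval space with parameters (φ,ψ) and induced operator μ. Set κ'' = ψ(φ(0) + ψ(φ(φ(0)))). Then for all a,b,c,d ∈ X, d(μ(a, μ(a,c,d), μ(b,c,d)), μ(a,c,d)) ≤ κ''. -/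
/-- in a coarse interval space with parameters `(φ, ψ)` and
induced operator `μ`, with `κ'' = ψ (φ 0 + ψ (φ (φ 0)))`:
`d(μ(a, μ(a,c,d), μ(b,c,d)), μ(a,c,d)) ≤ κ''`. -/
theorem stmt4 {X : Type*} [MetricSpace X] (I : X → X → Set X) (φ ψ : ℝ → ℝ)
    (μ : X → X → X → X) (hI : IsCoarseIntervalSpace I φ ψ)
    (hμ : IsInducedOperator I μ) :
    ∀ a b c d : X,
      dist (μ a (μ a c d) (μ b c d)) (μ a c d) ≤ ψ (φ 0 + ψ (φ (φ 0))) := by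
  intro a b c d
  obtain ⟨hm, -, -⟩ := hμ
  have z : ∀ {x : X} {A : Set X}, x ∈ A → x ∈ cmNbhd 0 A := by
    intro x A h
    exact ⟨x, h, by simp⟩
  have mono : ∀ {R S : ℝ} {x : X} {A : Set X}, R ≤ S → x ∈ cmNbhd R A → x ∈ cmNbhd S A := by
    rintro R S x A h ⟨y, hy, hxy⟩
    exact ⟨y, hy, hxy.trans h⟩
  have φ0 : 0 ≤ φ 0 := by
    have h1 : a ∈ I a a := by rw [hI.I1a]; rfl
    obtain ⟨y, -, hy⟩ := hI.I2 0 a a a (z h1) h1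
    exact dist_nonneg.trans hy
  have φφ : φ 0 ≤ φ (φ 0) := hI.φ_mono φ0
  have self : ∀ x y : X, y ∈ I x y := by
    intro x y
    obtain ⟨w, ⟨h1, h2⟩, -⟩ := hI.I3ne x y y
    rw [hI.I1a] at h2
    have h3 : w = y := h2
    rwa [h3] at h1
  obtain ⟨⟨m1, m2⟩, m3⟩ := hm a c d
  obtain ⟨⟨n1, n2⟩, n3⟩ := hm b c d
  generalize μ a c d = m at *
  generalize μ b c d = n at *
  obtain ⟨⟨p1, p2⟩, p3⟩ := hm a m n
  obtain ⟨⟨x1, x2⟩, x3⟩ := hm a n c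
  generalize μ a n c = x at *
  obtain ⟨⟨u1, u2⟩, u3⟩ := hm a x d
  generalize μ a x d = u at *
  have hx : x ∈ cmNbhd (φ 0) (I d c) := by
    have h := hI.I2 0 c d n (z n2)
    rw [hI.I1b d c]
    exact h (by rwa [hI.I1b])
  have hu2 : u ∈ cmNbhd (φ (φ 0)) (I c d) := by
    rw [hI.I1b c d]
    exact hI.I2 _ d c x hx (by rwa [hI.I1b])
  have hu1 : u ∈ cmNbhd (φ 0) (I a c) := hI.I2 0 a c x (z (by rwa [hI.I1b])) u1
  have hun : u ∈ cmNbhd (φ 0) (I a n) := hI.I2 0 a n x (z x1) u1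
  have hmu : dist m u ≤ ψ (φ (φ 0)) :=
    hI.I3diam _ a c d m u
      ⟨⟨mono (φ0.trans φφ) (z m1), mono (φ0.trans φφ) (z m2)⟩, mono (φ0.trans φφ) (z m3)⟩
      ⟨⟨mono φφ hu1, hu2⟩, mono (φ0.trans φφ) (z u3)⟩
  have hR : 0 ≤ φ 0 + ψ (φ (φ 0)) := add_nonneg φ0 (dist_nonneg.trans hmu)
  have hmn : m ∈ cmNbhd (φ 0 + ψ (φ (φ 0))) (I n a) := by
    obtain ⟨y, hy, huy⟩ := hun
    refine ⟨y, by rwa [hI.I1b], ?_⟩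
    linarith [dist_triangle m u y]
  exact hI.I3diam _ a m n _ _
    ⟨⟨mono hR (z p1), mono hR (z p2)⟩, mono hR (z p3)⟩
    ⟨⟨mono hR (z (self a m)), mono hR (z (by rw [hI.I1b]; exact self n m))⟩, hmn⟩
end

section
/- Let (X,d) be a metric space and I a coarse interval structure on (X,d), i.e. a map [·,·] : X×X → P(X) for which there exist κ₀ ≥ 0 and non-decreasing functions φ, ψ such that: (I1)' the Hausdorff distance d_H([a,a],{a}) ≤ κ₀ and d_H([a,b],[b,a]) ≤ κ₀ for all a,b; (I2)' c ∈ N_R([a,b]) implies [a,c] ⊆ N_{φ(R)}([a,b]); (I3)' N_{κ₀}([a,b]) ∩ N_{κ₀}([b,c]) ∩ N_{κ₀}([c,a]) ≠ ∅ for all a,b,c, and diam(N_R([a,b]) ∩ N_R([b,c]) ∩ N_R([c,a])) ≤ ψ(R) for all R ≥ κ₀. Then there exists another coarse interval structure I' = [·,·]' on (X,d), uniformly close to I (i.e. sup_{x,y} d_H([x,y],[x,y]') < ∞), which satisfies the stronger axioms: (I1) [a,a]' = {a} and [a,b]' = [b,a]' for all a,b; (I2) with some non-decreasing φ'; and (I3)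 [a,b]' ∩ [b,c]' ∩ [c,a]' ≠ ∅ for all a,b,c and diam(N_R([a,b]') ∩ N_R([b,c]') ∩ N_R([c,a]')) ≤ ψ'(R) for some non-decreasing ψ' and all R ≥ 0. -/
/-- A coarse interval structure on `(X,d)` with parameters `(κ₀, φ, ψ)`,
satisfying the relaxed axioms (I1)', (I2)', (I3)'.  Here `d_H(A,B) ≤ κ₀` is
rendered as mutual containment in closed `κ₀`-neighbourhoods. -/
structure IsCoarseIntervalStructure {X : Type*} [MetricSpace X]
    (I : X → X → Set X) (κ₀ : ℝ) (φ ψ : ℝ → ℝ) : Prop where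
  κ₀_nonneg : 0 ≤ κ₀
  I1'a : ∀ a : X, I a a ⊆ cmNbhd κ₀ {a} ∧ ({a} : Set X) ⊆ cmNbhd κ₀ (I a a)
  I1'b : ∀ a b : X, I a b ⊆ cmNbhd κ₀ (I b a) ∧ I b a ⊆ cmNbhd κ₀ (I a b)
  φ_mono : Monotone φ
  I2' : ∀ (R : ℝ) (a b c : X), c ∈ cmNbhd R (I a b) →
    I a c ⊆ cmNbhd (φ R) (I a b)
  ψ_mono : Monotone ψ
  I3'ne : ∀ a b c : X,
    (cmNbhd κ₀ (I a b) ∩ cmNbhd κ₀ (I b c) ∩ cmNbhd κ₀ (I c a)).Nonempty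
  I3'diam : ∀ (R : ℝ), κ₀ ≤ R → ∀ (a b c x y : X),
    x ∈ cmNbhd R (I a b) ∩ cmNbhd R (I b c) ∩ cmNbhd R (I c a) →
    y ∈ cmNbhd R (I a b) ∩ cmNbhd R (I b c) ∩ cmNbhd R (I c a) →
    dist x y ≤ ψ R

theorem cmNbhd_trans {X : Type*} [MetricSpace X] {R S T : ℝ} {A B : Set X} {x : X}
    (hx : x ∈ cmNbhd R A) (hAB : A ⊆ cmNbhd S B) (hT : R + S ≤ T) : x ∈ cmNbhd T B := by
  obtain ⟨a, ha, hd⟩ := hx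
  obtain ⟨b, hb, hd2⟩ := hAB ha
  exact ⟨b, hb, by linarith [dist_triangle x a b]⟩

theorem cmNbhd_weaken {X : Type*} [MetricSpace X] {R T : ℝ} {A : Set X} {x : X}
    (hx : x ∈ cmNbhd R A) (hT : R ≤ T) : x ∈ cmNbhd T A := by
  obtain ⟨a, ha, hd⟩ := hx
  exact ⟨a, ha, hd.trans hT⟩

/-- The improved intervals. -/
def cmImproved {X : Type*} [MetricSpace X] (I : X → X → Set X) (K : ℝ) (a b : X) : Set X :=
  {x | (a = b ∧ x = a) ∨ (a ≠ b ∧ (x ∈ cmNbhd K (I a b) ∨ x ∈ cmNbhd K (I b a)))}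

/-- every coarse interval structure on a metric space is uniformly
close to a coarse interval structure satisfying the stronger axioms
(I1)–(I3). -/
theorem stmt7 {X : Type*} [MetricSpace X] (I : X → X → Set X)
    (κ₀ : ℝ) (φ ψ : ℝ → ℝ) (hI : IsCoarseIntervalStructure I κ₀ φ ψ) :
    ∃ I' : X → X → Set X,
      -- `I'` is uniformly close to `I`:
      (∃ C : ℝ, 0 ≤ C ∧ ∀ x y : X,
        I x y ⊆ cmNbhd C (I' x y) ∧ I' x y ⊆ cmNbhd C (I x y)) ∧
      -- (I1):
      (∀ a : X, I' a a = {a}) ∧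
      (∀ a b : X, I' a b = I' b a) ∧
      -- (I2):
      (∃ φ' : ℝ → ℝ, Monotone φ' ∧ ∀ (R : ℝ) (a b c : X),
        c ∈ cmNbhd R (I' a b) → I' a c ⊆ cmNbhd (φ' R) (I' a b)) ∧
      -- (I3):
      (∀ a b c : X, (I' a b ∩ I' b c ∩ I' c a).Nonempty) ∧
      (∃ ψ' : ℝ → ℝ, Monotone ψ' ∧ ∀ (R : ℝ), 0 ≤ R → ∀ (a b c x y : X),
        x ∈ cmNbhd R (I' a b) ∩ cmNbhd R (I' b c) ∩ cmNbhd R (I' c a) →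
        y ∈ cmNbhd R (I' a b) ∩ cmNbhd R (I' b c) ∩ cmNbhd R (I' c a) →
        dist x y ≤ ψ' R) := by
  have hk := hI.κ₀_nonneg
  have hself : ∀ a b : X, a ∈ cmNbhd (3 * κ₀) (I a b) := by
    intro a b
    obtain ⟨p, ⟨h1, h2⟩, -⟩ := hI.I3'ne a a b
    obtain ⟨q, hq, hd⟩ := cmNbhd_trans h1 (hI.I1'a a).1 le_rfl
    obtain ⟨r, hr, hd2⟩ := h2
    rw [Set.mem_singleton_iff] at hq
    subst hq
    refine ⟨r, hr, ?_⟩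
    have := dist_triangle_left q r p
    linarith
  have hsymm : ∀ a b : X, cmImproved I (3 * κ₀) a b = cmImproved I (3 * κ₀) b a := by
    intro a b
    ext x
    simp only [cmImproved, Set.mem_setOf_eq]
    by_cases h : a = b
    · subst h; tauto
    · have h' : b ≠ a := fun e => h e.symm
      tauto
  have hdiag : ∀ a : X, cmImproved I (3 * κ₀) a a = {a} := by
    intro a
    ext x
    simp [cmImproved]
  have hleft : ∀ a b : X, a ∈ cmImproved I (3 * κ₀) a b := by
    intro a b
    by_cases h : a = b
    · exact Or.inl ⟨h, rfl⟩
    · exact Or.inr ⟨h, Or.inl (hself a b)⟩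
  have hright : ∀ a b : X, b ∈ cmImproved I (3 * κ₀) a b := by
    intro a b
    rw [hsymm]
    exact hleft b a
  have hC1 : ∀ a b : X, I a b ⊆ cmNbhd (4 * κ₀) (cmImproved I (3 * κ₀) a b) := by
    intro a b x hx
    by_cases h : a = b
    · subst h
      rw [hdiag]
      exact cmNbhd_weaken ((hI.I1'a a).1 hx) (by linarith)
    · refine ⟨x, Or.inr ⟨h, Or.inl ⟨x, hx, ?_⟩⟩, ?_⟩ <;> rw [dist_self] <;> linarith
  have hC2 : ∀ a b : X, cmImproved I (3 * κ₀) a b ⊆ cmNbhd (4 * κ₀) (I a b) := by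
    rintro a b x (⟨rfl, rfl⟩ | ⟨h, hx | hx⟩)
    · exact cmNbhd_weaken (hself x x) (by linarith)
    · exact cmNbhd_weaken hx (by linarith)
    · exact cmNbhd_trans hx (hI.I1'b a b).2 (by linarith)
  refine ⟨cmImproved I (3 * κ₀), ⟨4 * κ₀, by linarith, fun x y => ⟨hC1 x y, hC2 x y⟩⟩,
    hdiag, hsymm, ⟨fun R => 4 * κ₀ + φ (R + 4 * κ₀) + 4 * κ₀, ?_, ?_⟩, ?_,
    ⟨fun R => ψ (R + 4 * κ₀), ?_, ?_⟩⟩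
  · intro R S h
    have : φ (R + 4 * κ₀) ≤ φ (S + 4 * κ₀) := hI.φ_mono (by linarith)
    simp only
    linarith
  · intro R a b c hc x hx
    have h1 := hI.I2' _ a b c (cmNbhd_trans hc (hC2 a b) le_rfl)
    exact cmNbhd_trans (cmNbhd_trans (hC2 a c hx) h1 le_rfl) (hC1 a b) le_rfl
  · intro a b c
    by_cases hab : a = b
    · subst hab
      exact ⟨a, ⟨hleft _ _, hleft _ _⟩, hright _ _⟩
    by_cases hbc : b = c
    · subst hbc
      exact ⟨b, ⟨hright _ _, hleft _ _⟩, hleft _ _⟩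
    by_cases hca : c = a
    · subst hca
      exact ⟨c, ⟨hleft _ _, hright _ _⟩, hleft _ _⟩
    obtain ⟨p, ⟨h1, h2⟩, h3⟩ := hI.I3'ne a b c
    exact ⟨p, ⟨Or.inr ⟨hab, Or.inl (cmNbhd_weaken h1 (by linarith))⟩,
      Or.inr ⟨hbc, Or.inl (cmNbhd_weaken h2 (by linarith))⟩⟩,
      Or.inr ⟨hca, Or.inl (cmNbhd_weaken h3 (by linarith))⟩⟩
  · intro R S h
    exact hI.ψ_mono (by linarith)
  · rintro R hR a b c x y ⟨⟨hx1, hx2⟩, hx3⟩ ⟨⟨hy1, hy2⟩, hy3⟩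
    exact hI.I3'diam (R + 4 * κ₀) (by linarith) a b c x y
      ⟨⟨cmNbhd_trans hx1 (hC2 _ _) le_rfl, cmNbhd_trans hx2 (hC2 _ _) le_rfl⟩,
        cmNbhd_trans hx3 (hC2 _ _) le_rfl⟩
      ⟨⟨cmNbhd_trans hy1 (hC2 _ _) le_rfl, cmNbhd_trans hy2 (hC2 _ _) le_rfl⟩,
        cmNbhd_trans hy3 (hC2 _ _) le_rfl⟩
end

section
/- Let (X,d) be a geodesic metric space, and for p,a,b ∈ X write (a|b)_p = (d(a,p) + d(b,p) − d(a,b))/2 for the Gromov product. Then the following are equivalent: (i) there is a constant δ > 0 such that min{(a|b)_p, (b|c)_p} ≤ (a|c)_p + δ for all a,b,c,p ∈ X; (ii) there is a non-decreasing function φ : ℝ≥0 → ℝ≥0 such that min{(a|b)_p, (b|c)_p} ≤ φ((a|c)_p) for all a,b,c,p ∈ X. -/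
/-- The Gromov product `(a|b)_p = (d(a,p) + d(b,p) − d(a,b))/2`. -/
noncomputable def gromovProd {X : Type*} [MetricSpace X] (p a b : X) : ℝ :=
  (dist a p + dist b p - dist a b) / 2

/-- A metric space is geodesic if any two points are joined by an isometrically
parametrised path. -/
def IsGeodesicSpace (X : Type*) [MetricSpace X] : Prop :=
  ∀ x y : X, ∃ γ : ℝ → X, γ 0 = x ∧ γ (dist x y) = y ∧
    ∀ s ∈ Set.Icc (0 : ℝ) (dist x y), ∀ t ∈ Set.Icc (0 : ℝ) (dist x y),
      dist (γ s) (γ t) = |s - t|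

/-- for a geodesic metric space, Gromov's four-point condition
(with additive constant `δ`) is equivalent to its coarse relaxation via a
non-decreasing function `φ`. -/
theorem stmt8 {X : Type*} [MetricSpace X] (hgeo : IsGeodesicSpace X) :
    (∃ δ : ℝ, 0 < δ ∧ ∀ a b c p : X,
      min (gromovProd p a b) (gromovProd p b c) ≤ gromovProd p a c + δ) ↔
    (∃ φ : ℝ → ℝ, Monotone φ ∧ ∀ a b c p : X,
      min (gromovProd p a b) (gromovProd p b c) ≤ φ (gromovProd p a c)) := by
  constructor
  · rintro ⟨δ, _, h⟩
    exact ⟨fun t => t + δ, fun x y hxy => by simpa using hxy, h⟩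
  · rintro ⟨φ, _, h⟩
    refine ⟨3 * |φ 0| + 1, by positivity, ?_⟩
    intro a b c p
    obtain ⟨γ, h0, h1, hγ⟩ := hgeo a c
    have t1 := dist_triangle a c p
    have t2 := dist_triangle a p c
    have t3 := dist_triangle c a p
    have e1 := dist_comm c a
    have e2 := dist_comm p c
    obtain ⟨t, ht⟩ : ∃ t : ℝ, t = (dist a c + dist a p - dist c p) / 2 := ⟨_, rfl⟩
    have htm : t ∈ Set.Icc (0 : ℝ) (dist a c) := ⟨by linarith, by linarith⟩
    have hq1 := hγ 0 ⟨le_refl _, dist_nonneg⟩ t htm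
    have hq2 := hγ (dist a c) ⟨dist_nonneg, le_refl _⟩ t htm
    rw [h0, zero_sub, abs_neg, abs_of_nonneg htm.1] at hq1
    rw [h1, abs_of_nonneg (by linarith [htm.2])] at hq2
    generalize γ t = q at hq1 hq2
    have hz : gromovProd q a c = 0 := by unfold gromovProd; linarith
    have hp := h a p c q
    have hb := h a b c q
    rw [hz] at hp hb
    have hk := le_abs_self (φ 0)
    generalize |φ 0| = k at hk
    have d1 := dist_triangle a q p
    have d2 := dist_triangle b q p
    have d3 := dist_triangle c q p
    have e3 := dist_comm q p
    have hpq : dist p q ≤ gromovProd p a c + 2 * k := by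
      unfold gromovProd at hp ⊢
      rcases min_le_iff.1 hp with hp | hp <;> linarith [dist_comm p a]
    rcases min_le_iff.1 hb with hb | hb
    · refine (min_le_left _ _).trans ?_
      unfold gromovProd at *
      linarith
    · refine (min_le_right _ _).trans ?_
      unfold gromovProd at *
      linarith
end

section
/- Let (X,d,μ) be a coarse median space and n ∈ ℕ. Then the following are equivalent: (Rank condition) for every λ > 0 there is a constant C(λ) > 0 such that for any a,b ∈ X and any e₁,…,e_{n+1} ∈ [a,b] with d(a, μ(e_i,a,e_j)) ≤ λ for all i ≠ j, one has min{d(a,e_i) : i = 1,…,n+1} ≤ C(λ); (Thin (n+1)-cubes condition) there exists a non-decreasing function φ such that for all x₁,…,x_{n+1}, p, q ∈ X, min{d(p, μ(x_i,p,q)) : i = 1,…,n+1} ≤ φ(max{d(p, μ(x_i,x_j,p)) : i ≠ j}). -/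
/-- A coarse median space: a metric space with a ternary operator satisfying
(M1), (M2), (C1) and (C2). -/
structure IsCoarseMedianSpace {X : Type*} [MetricSpace X] (μ : X → X → X → X)
    (ρ : ℝ → ℝ) (κ₄ : ℝ) : Prop where
  M1 : ∀ a b : X, μ a a b = a
  M2₁ : ∀ a b c : X, μ a b c = μ a c b
  M2₂ : ∀ a b c : X, μ a b c = μ b a c
  ρ_mono : Monotone ρ
  C1 : ∀ a a' b b' c c' : X,
    dist (μ a b c) (μ a' b' c') ≤ ρ (dist a a' + dist b b' + dist c c')
  C2 : ∀ a b c d : X, dist (μ (μ a b c) b d) (μ a b (μ c b d)) ≤ κ₄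

/-- for a coarse median space and `n ∈ ℕ`, the rank condition
(the paper's characterisation of rank at most `n`) is equivalent to the thin
`(n+1)`-cubes condition. -/
theorem stmt10 {X : Type*} [MetricSpace X] (μ : X → X → X → X)
    (ρ : ℝ → ℝ) (κ₄ : ℝ) (h : IsCoarseMedianSpace μ ρ κ₄) (n : ℕ) :
    -- Rank condition:
    (∀ lam : ℝ, 0 < lam → ∃ C : ℝ, 0 < C ∧
      ∀ (a b : X) (e : Fin (n + 1) → X),
        (∀ i, e i ∈ cmInterval μ a b) →
        (∀ i j, i ≠ j → dist a (μ (e i) a (e j)) ≤ lam) →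
        ∃ i, dist a (e i) ≤ C) ↔
    -- Thin (n+1)-cubes condition:
    (∃ φ : ℝ → ℝ, Monotone φ ∧ ∀ (x : Fin (n + 1) → X) (p q : X) (ξ : ℝ),
      0 ≤ ξ → (∀ i j, i ≠ j → dist p (μ (x i) (x j) p) ≤ ξ) →
      ∃ i, dist p (μ (x i) p q) ≤ φ ξ) := by
  have sw : ∀ a b c : X, μ a b c = μ c b a := fun a b c => by
    rw [h.M2₁ a b c, h.M2₂ a c b, h.M2₁ c a b]
  have idem : ∀ p q : X, μ q p q = q := fun p q => by
    rw [h.M2₁ q p q, h.M1]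
  have absorb : ∀ m p q : X, dist (μ (μ m p q) p q) (μ m p q) ≤ κ₄ := fun m p q => by
    have := h.C2 m p q q
    rwa [idem] at this
  constructor
  · intro hR
    choose C hC0 hC using hR
    let L : ℕ → ℝ := fun k => |ρ k + 2 * κ₄ + ρ κ₄| + 1
    have hL : ∀ k, 0 < L k := fun k => by positivity
    refine ⟨fun ξ => ∑ k ∈ Finset.range (⌈ξ⌉₊ + 1), C (L k) (hL k), ?_, ?_⟩
    · intro s t hst
      apply Finset.sum_le_sum_of_subset_of_nonneg
      · apply Finset.range_mono
        have := Nat.ceil_mono hst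
        omega
      · intro k _ _
        exact (hC0 _ _).le
    · intro x p q ξ hξ hx
      obtain ⟨i, hi⟩ := hC (L ⌈ξ⌉₊) (hL _) p q (fun i => μ (x i) p q)
        (fun i => ⟨x i, h.M2₂ _ _ _⟩) (by
          intro i j hij
          have h1 := h.C2 (μ (x i) p q) p (x j) q
          have h2 := h.C2 q p (x i) (x j)
          rw [sw q p (x i), sw q p (μ (x i) p (x j))] at h2
          have h3 := h.C1 (μ (μ (x i) p q) p (x j)) (μ (μ (x i) p (x j)) p q) p p q q
          have h4 := absorb (μ (x i) p (x j)) p q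
          have h5 := h.C1 p (μ (x i) p (x j)) p p q q
          rw [h.M1] at h5
          have h6 := hx i j hij
          rw [h.M2₁] at h6
          simp only [dist_self, add_zero] at h3 h5
          have h7 := h.ρ_mono h2
          have h8 := h.ρ_mono (h6.trans (Nat.le_ceil ξ))
          have t1 := dist_triangle p (μ (μ (x i) p (x j)) p q)
            (μ (μ (x i) p q) p (μ (x j) p q))
          have t2 := dist_triangle (μ (μ (x i) p (x j)) p q)
            (μ (μ (μ (x i) p (x j)) p q) p q) (μ (μ (x i) p q) p (μ (x j) p q))
          have t3 := dist_triangle (μ (μ (μ (x i) p (x j)) p q) p q)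
            (μ (μ (μ (x i) p q) p (x j)) p q) (μ (μ (x i) p q) p (μ (x j) p q))
          rw [dist_comm] at h3 h4
          have h9 := le_abs_self (ρ ⌈ξ⌉₊ + 2 * κ₄ + ρ κ₄)
          simp only [L]
          linarith)
      refine ⟨i, hi.trans ?_⟩
      exact Finset.single_le_sum (f := fun k => C (L k) (hL k))
        (fun k _ => (hC0 _ _).le) (Finset.mem_range.2 (Nat.lt_succ_self _))
  · rintro ⟨φ, -, hφ⟩ lam hlam
    refine ⟨max 1 (φ lam + κ₄), by positivity, ?_⟩
    intro a b e he hd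
    obtain ⟨i, hi⟩ := hφ e a b lam hlam.le (fun i j hij => by
      rw [h.M2₁]; exact hd i j hij)
    refine ⟨i, le_max_of_le_right ?_⟩
    obtain ⟨y, hy⟩ := he i
    rw [h.M2₂] at hy
    have h1 := absorb y a b
    rw [← hy] at h1
    linarith [dist_triangle a (μ (e i) a b) (e i)]
end

section
/- Let (X,d,μ) be a uniformly discrete, quasi-geodesic coarse median space with bounded geometry and let n ∈ ℕ. Suppose there is a function p : ℝ⁺ → ℝ⁺ with p(r)/r^{n+1} → 0 as r → ∞ such that card [a,b] ≤ p(d(a,b)) for all a,b ∈ X. Then for every L > 0 there exists a constant C > 0 such that for every L-quasi-morphism σ from the median (n+1)-cube I^{n+1} to X, at least one of the vertices ē_i adjacent to the origin 0̄ satisfies d(σ(ē_i), σ(0̄)) ≤ C. (That is, X has rank at most n in the sense of the coarse-cube characterisation of rank.) -/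
/-- Majority vote on three booleans. -/
def boolMaj (u v w : Bool) : Bool := (u && v) || (v && w) || (u && w)

/-- The median of the median `n`-cube `{0,1}ⁿ`: coordinatewise majority
vote. -/
def cubeMedian {n : ℕ} (u v w : Fin n → Bool) : Fin n → Bool :=
  fun i => boolMaj (u i) (v i) (w i)

/-- Iterated join `y 0 ∨ ... ∨ y (k-1)` with base point `z`, where `a ∨ b = m a b t`. -/
def cmFold {Q : Type*} (m : Q → Q → Q → Q) (z t : Q) (y : ℕ → Q) : ℕ → Q
  | 0 => z
  | k + 1 => m (cmFold m z t y k) (y k) t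

/-- The exact algebra of medians satisfying the four point condition. -/
structure CmMed {Q : Type*} (m : Q → Q → Q → Q) : Prop where
  M1 : ∀ a b, m a a b = a
  S1 : ∀ a b c, m a b c = m a c b
  S2 : ∀ a b c, m a b c = m b a c
  A : ∀ a b c d, m (m a b c) b d = m a b (m c b d)

namespace CmMed
variable {Q : Type*} {m : Q → Q → Q → Q}

lemma S3 (H : CmMed m) (a b c : Q) : m a b c = m c b a := by
  rw [H.S1, H.S2, H.S1]

lemma M3 (H : CmMed m) (a b : Q) : m a b b = b := by rw [H.S3, H.M1]

lemma M2 (H : CmMed m) (a b : Q) : m a b a = a := by rw [H.S1, H.M1]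

/-- If `c ∈ [a,u]` and `u ∈ [a,y]` then `c ∈ [a,y]`. -/
lemma btw_trans (H : CmMed m) {a c u y : Q} (h1 : m a c u = c) (h2 : m a u y = u) : m a c y = c := by
  have := H.A c a u y
  rw [H.S2 c a u, h1, H.S2 u a y, h2, H.S2 c a u, h1, H.S2 c a y] at this
  exact this

/-- `a ≤ b` gives `b ∈ [a,t]` when `b ∈ [z,t]`. -/
lemma le_flip (H : CmMed m) {z t a b : Q} (h1 : m z a b = a) (hb : m z b t = b) : m a b t = b := by
  have := H.A a b z t
  rw [H.S3 a b z, H.S1 z b a, h1, hb, H.M3] at this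
  exact this

lemma core (H : CmMed m) {z t a E y e : Q} (hE : m z E t = E) (he : m z e t = e)
    (ha : m z a E = a) (hy : m z y e = y) (hd : m z E e = z) :
    m z (m a y t) E = a := by
  have hat : m z a t = a := H.btw_trans ha hE
  have hyt : m z y t = y := H.btw_trans hy he
  set u := m a y t with hu
  set c := m z u E with hc
  -- u in [z,t]
  have hut : m z u t = u := by
    have := H.A z t y a
    rw [H.S1 z t y, hyt, H.S1 y t a, H.S2 y a t, ← hu, H.S1 z t u] at this
    exact this.symm
  -- a ≤ u
  have hau : m z a u = a := by
    have := H.A z a t y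
    rw [hat, H.M1, H.S2 t a y, H.S1 a t y, ← hu] at this
    exact this.symm
  have hyu : m z y u = y := by
    have := H.A z y t a
    rw [hyt, H.M1, H.S3 t y a, ← hu] at this
    exact this.symm
  have hcu : m z c u = c := by
    have := H.A u z u E
    rw [H.M2, H.S2 u z E, ← hc, H.S2 u z c, H.S1 z u c] at this
    exact this.symm
  have hcE : m z c E = c := by
    have := H.A u z E E
    rw [H.M2, H.S2 u z E, ← hc, H.S2 c z E] at this
    exact this
  have hac : m z a c = a := by
    have := H.A a z u E
    rw [H.S2 a z u, hau, H.S2 a z E, ha, H.S2 u z E, ← hc, H.S2 a z c] at this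
    exact this.symm
  -- c ∧ y = z
  have hcy : m z c y = z := by
    have h1 := H.A y z e E
    rw [H.S2 y z e, hy, H.S2 e z E, H.S1 z e E, hd, H.M3, H.S2 y z E] at h1
    have h2 := H.A c z E y
    rw [H.S2 c z E, hcE, H.S2 E z y, H.S1 z E y, h1, H.M3, H.S2 c z y] at h2
    exact h2
  -- u ∈ [a,y]
  have hauy : m a u y = u := by
    have h1 : m y u t = u := H.le_flip hyu hut
    have h2 := H.A a t y y
    rw [H.M2, H.S1 a t y, ← hu] at h2
    have h3 := H.A a y t u
    rw [H.S1 t y u, H.S3 t u y, h1, ← hu, H.S2 u y u, H.M3, H.S1 a y u] at h3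
    exact h3.symm
  have hacu : m a c u = c := H.le_flip hac hcu
  have h1 : m a c y = c := H.btw_trans hacu hauy
  have h2 : m c a y = a := by
    apply H.btw_trans (u := z)
    · rw [H.S3, hac]
    · rw [H.S2, hcy]
  rw [← h1, H.S2, h2]

/-- joins stay in `[z,t]`. -/
lemma join_mem (H : CmMed m) {z t a b : Q} (hb : m z b t = b) : m z (m a b t) t = m a b t := by
  have := H.A z t b a
  rw [H.S1 z t b, hb, H.S1 b t a, H.S2 b a t, H.S1 z t] at this
  exact this.symm

/-- monotonicity of joins. -/
lemma join_mono (H : CmMed m) {z t a b a' b' : Q} (ha' : m z a' t = a') (hb' : m z b' t = b')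
    (ha : m z a a' = a) (hb : m z b b' = b) :
    m z (m a b t) (m a' b' t) = m a b t := by
  have h1 : m t a a' = a' := by rw [H.S2, H.S1]; exact H.le_flip ha ha'
  have h2 : m t b b' = b' := by rw [H.S2, H.S1]; exact H.le_flip hb hb'
  have hbt : m z b t = b := H.btw_trans hb hb'
  have hab := H.join_mem (a := a) hbt
  set J := m a b t with hJ
  set J' := m a' b' t with hJ'
  have e1 : m b t J' = J' := by
    have := H.A b t b' a'
    rw [H.S2 b t b', h2, H.S1 b' t a', H.S2 b' a' t, ← hJ'] at this
    exact this.symm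
  have e2 : m a t J' = J' := by
    have := H.A a t a' b'
    rw [H.S2 a t a', h1, H.S1 a' t b', ← hJ'] at this
    exact this.symm
  have e3 : m J t J' = J' := by
    have := H.A a t b J'
    rw [e1, e2, H.S1 a t b, ← hJ] at this
    exact this
  -- flip
  have := H.le_flip (z := t) (t := z) (a := J') (b := J) (by
      rw [H.S2, H.S3, e3]) (by rw [H.S3, hab])
  rw [H.S3, H.S1] at this
  rw [H.S1]; exact this

lemma main (H : CmMed m) {z t : Q} {E e x y : ℕ → Q}
    (hEs : ∀ k, m (E k) (e k) t = E (k + 1)) (hd : ∀ k, m z (E k) (e k) = z)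
    (hEt : ∀ k, m z (E k) t = E k) (het : ∀ k, m z (e k) t = e k)
    (hx : ∀ k, m z (x k) (e k) = x k) (hy : ∀ k, m z (y k) (x k) = y k) (N : ℕ) :
    (∀ k < N, m z (cmFold m z t y N) (e k) = y k) ∧
      m z (cmFold m z t y N) (cmFold m z t x N) = cmFold m z t y N := by
  have hye : ∀ k, m z (y k) (e k) = y k := fun k => H.btw_trans (hy k) (hx k)
  have hxt : ∀ k, m z (x k) t = x k := fun k => H.btw_trans (hx k) (het k)
  have hFE : ∀ k, m z (cmFold m z t y k) (E k) = cmFold m z t y k := by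
    intro k
    induction k with
    | zero => simp only [cmFold]; exact H.M1 _ _
    | succ k ih =>
      simp only [cmFold]
      rw [← hEs k]
      exact H.join_mono (hEt k) (het k) ih (hye k)
  have hFt : ∀ k, m z (cmFold m z t x k) t = cmFold m z t x k := by
    intro k
    cases k with
    | zero => exact H.M1 _ _
    | succ k => exact H.join_mem (hxt k)
  refine ⟨?_, ?_⟩
  · induction N with
    | zero => intro k hk; omega
    | succ N ih =>
      intro k hk
      rcases Nat.lt_succ_iff_lt_or_eq.mp hk with hk' | rfl
      · have hc : m z (cmFold m z t y (N + 1)) (E N) = cmFold m z t y N :=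
          H.core (hEt N) (het N) (hFE N) (hye N) (hd N)
        -- e k ≤ E N
        have heE : ∀ j, k < j → m z (e k) (E j) = e k := by
          intro j hj
          induction j, hj using Nat.le_induction with
          | base =>
            rw [← hEs k]
            have := H.A z (e k) t (E k)
            rw [het, H.M1, H.S3 t (e k) (E k)] at this
            exact this.symm
          | succ j hj ih2 =>
            refine H.btw_trans ih2 ?_
            rw [← hEs j]
            have := H.A z (E j) t (e j)
            rw [hEt, H.M1, H.S2 t, H.S1 (E j) t] at this
            exact this.symm
        have h1 := H.A (cmFold m z t y (N + 1)) z (E N) (e k)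
        rw [H.S2 _ z (E N), hc, H.S2 _ z (e k), ih k hk', H.S2 (E N) z, H.S1 z (E N),
          heE N hk', H.S2 _ z (e k)] at h1
        exact h1.symm
      · simp only [cmFold]
        rw [H.S2 (cmFold m z t y k)]
        exact H.core (het k) (hEt k) (hye k) (hFE k) (by rw [H.S1]; exact hd k)
  · induction N with
    | zero => exact H.M1 _ _
    | succ N ih => exact H.join_mono (hFt N) (hxt N) ih (hy N)

end CmMed

/-- Functions at bounded distance. -/
def cmSetoid (I : Type*) (X : Type*) [MetricSpace X] : Setoid (I → X) where
  r f g := ∃ B : ℝ, ∀ i, dist (f i) (g i) ≤ B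
  iseqv := by
    refine ⟨fun f => ⟨0, fun i => by simp⟩, ?_, ?_⟩
    · rintro f g ⟨B, hB⟩
      exact ⟨B, fun i => by rw [dist_comm]; exact hB i⟩
    · rintro f g k ⟨B, hB⟩ ⟨B', hB'⟩
      exact ⟨B + B', fun i => (dist_triangle _ (g i) _).trans (add_le_add (hB i) (hB' i))⟩

/-- The median on the quotient. -/
noncomputable def cmQ {I X : Type*} [MetricSpace X] (μ : X → X → X → X)
    (a b c : Quotient (cmSetoid I X)) : Quotient (cmSetoid I X) :=
  Quotient.mk _ (fun i => μ (a.out i) (b.out i) (c.out i))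

lemma cmQ_mk {I X : Type*} [MetricSpace X] {μ : X → X → X → X} {ρ : ℝ → ℝ} {κ₄ : ℝ}
    (h : IsCoarseMedianSpace μ ρ κ₄) (f g k : I → X) :
    cmQ μ (Quotient.mk (cmSetoid I X) f) (Quotient.mk _ g) (Quotient.mk _ k) =
      Quotient.mk _ (fun i => μ (f i) (g i) (k i)) := by
  apply Quotient.sound
  obtain ⟨B1, h1⟩ := Quotient.mk_out (s := cmSetoid I X) f
  obtain ⟨B2, h2⟩ := Quotient.mk_out (s := cmSetoid I X) g
  obtain ⟨B3, h3⟩ := Quotient.mk_out (s := cmSetoid I X) k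
  exact ⟨ρ (B1 + B2 + B3), fun i => (h.C1 _ _ _ _ _ _).trans
    (h.ρ_mono (add_le_add (add_le_add (h1 i) (h2 i)) (h3 i)))⟩

lemma cmQ_med {I X : Type*} [MetricSpace X] {μ : X → X → X → X} {ρ : ℝ → ℝ} {κ₄ : ℝ}
    (h : IsCoarseMedianSpace μ ρ κ₄) : CmMed (cmQ (I := I) μ) where
  M1 a b := by
    induction a using Quotient.inductionOn
    induction b using Quotient.inductionOn
    rw [cmQ_mk h]; simp only [h.M1]
  S1 a b c := by
    induction a using Quotient.inductionOn
    induction b using Quotient.inductionOn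
    induction c using Quotient.inductionOn
    rw [cmQ_mk h, cmQ_mk h]; congr 1; funext i; exact h.M2₁ _ _ _
  S2 a b c := by
    induction a using Quotient.inductionOn
    induction b using Quotient.inductionOn
    induction c using Quotient.inductionOn
    rw [cmQ_mk h, cmQ_mk h]; congr 1; funext i; exact h.M2₂ _ _ _
  A a b c d := by
    induction a using Quotient.inductionOn
    induction b using Quotient.inductionOn
    induction c using Quotient.inductionOn
    induction d using Quotient.inductionOn
    rw [cmQ_mk h, cmQ_mk h, cmQ_mk h, cmQ_mk h]
    exact Quotient.sound ⟨κ₄, fun i => h.C2 _ _ _ _⟩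

lemma cmFold_mk {I X : Type*} [MetricSpace X] {μ : X → X → X → X} {ρ : ℝ → ℝ} {κ₄ : ℝ}
    (h : IsCoarseMedianSpace μ ρ κ₄) (z t : I → X) (y : I → ℕ → X) (k : ℕ) :
    cmFold (cmQ μ) (Quotient.mk (cmSetoid I X) z) (Quotient.mk _ t)
      (fun k => Quotient.mk _ (fun i => y i k)) k =
      Quotient.mk _ (fun i => cmFold μ (z i) (t i) (y i) k) := by
  induction k with
  | zero => rfl
  | succ k ih => simp only [cmFold]; rw [ih, cmQ_mk h]

/-- Quasi-morphism condition. -/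
def CmQM {X : Type*} [MetricSpace X] (μ : X → X → X → X) (N : ℕ) (L : ℝ)
    (σ : (Fin N → Bool) → X) : Prop :=
  ∀ u v w : Fin N → Bool, dist (μ (σ u) (σ v) (σ w)) (σ (cubeMedian u v w)) ≤ L

/-- Vertices adjacent to the origin, indexed by naturals. -/
def cmE (N k : ℕ) : Fin N → Bool := fun j => decide (j.val = k)

/-- Vertices with the first `k` coordinates one. -/
def cmEE (N k : ℕ) : Fin N → Bool := fun j => decide (j.val < k)

lemma coarse_main {X : Type*} [MetricSpace X] {μ : X → X → X → X} {ρ : ℝ → ℝ} {κ₄ : ℝ}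
    (h : IsCoarseMedianSpace μ ρ κ₄) (N : ℕ) (L : ℝ) :
    ∃ B : ℝ, 0 ≤ B ∧ ∀ σ : (Fin N → Bool) → X, CmQM μ N L σ → ∀ u v x y : ℕ → X,
      (∀ k, x k = μ (σ fun _ => false) (u k) (σ (cmE N k))) →
      (∀ k, y k = μ (σ fun _ => false) (v k) (x k)) →
      (∀ k < N, dist (μ (σ fun _ => false)
        (cmFold μ (σ fun _ => false) (σ fun _ => true) y N) (σ (cmE N k))) (y k) ≤ B) ∧
      dist (μ (σ fun _ => false) (cmFold μ (σ fun _ => false) (σ fun _ => true) y N)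
          (cmFold μ (σ fun _ => false) (σ fun _ => true) x N))
        (cmFold μ (σ fun _ => false) (σ fun _ => true) y N) ≤ B := by
  let I := {σ : (Fin N → Bool) → X // CmQM μ N L σ} × (ℕ → X) × (ℕ → X)
  let z : I → X := fun i => i.1.1 fun _ => false
  let t : I → X := fun i => i.1.1 fun _ => true
  let e : ℕ → I → X := fun k i => i.1.1 (cmE N k)
  let E : ℕ → I → X := fun k i => i.1.1 (cmEE N k)
  let x : I → ℕ → X := fun i k => μ (z i) (i.2.1 k) (e k i)
  let y : I → ℕ → X := fun i k => μ (z i) (i.2.2 k) (x i k)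
  have H := cmQ_med (I := I) h
  have hom : ∀ a b c d : Fin N → Bool, cubeMedian a b c = d →
      cmQ μ (Quotient.mk (cmSetoid I X) fun i => i.1.1 a) (Quotient.mk _ fun i => i.1.1 b)
        (Quotient.mk _ fun i => i.1.1 c) = Quotient.mk _ fun i => i.1.1 d := by
    intro a b c d hd
    rw [cmQ_mk h]
    exact Quotient.sound ⟨L, fun i => by rw [← hd]; exact i.1.2 a b c⟩
  have proj : ∀ a b c : Quotient (cmSetoid I X),
      cmQ μ a (cmQ μ a b c) c = cmQ μ a b c := by
    intro a b c
    have := H.A b a c c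
    rw [H.M2, H.S2 b a c, H.S2 _ a c] at this
    exact this
  have key := H.main (z := Quotient.mk _ z) (t := Quotient.mk _ t)
    (E := fun k => Quotient.mk _ (E k)) (e := fun k => Quotient.mk _ (e k))
    (x := fun k => Quotient.mk _ (fun i => x i k))
    (y := fun k => Quotient.mk _ (fun i => y i k))
    (by
      intro k; apply hom; funext j
      simp only [cubeMedian, boolMaj, cmE, cmEE]
      by_cases h1 : j.val < k <;> by_cases h2 : j.val = k <;>
        by_cases h3 : j.val < k + 1 <;> simp [h1, h2, h3] <;> omega)
    (by
      intro k; apply hom; funext j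
      simp only [cubeMedian, boolMaj, cmE, cmEE]
      by_cases h1 : j.val < k <;> by_cases h2 : j.val = k <;> simp [h1, h2] <;> omega)
    (by intro k; apply hom; funext j; simp [cubeMedian, boolMaj])
    (by intro k; apply hom; funext j; simp [cubeMedian, boolMaj])
    (by
      intro k
      have := proj (Quotient.mk _ z) (Quotient.mk _ fun i => i.2.1 k) (Quotient.mk _ (e k))
      rw [cmQ_mk h] at this
      exact this)
    (by
      intro k
      have := proj (Quotient.mk _ z) (Quotient.mk _ fun i => i.2.2 k)
        (Quotient.mk _ fun i => x i k)
      rw [cmQ_mk h] at this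
      exact this) N
  rw [cmFold_mk h, cmFold_mk h, cmQ_mk h] at key
  obtain ⟨k1, k2⟩ := key
  obtain ⟨B0, hB0⟩ := Quotient.exact k2
  have k1' : ∀ k, ∃ B : ℝ, k < N → ∀ i : I,
      dist (μ (z i) (cmFold μ (z i) (t i) (y i) N) (e k i)) (y i k) ≤ B := by
    intro k
    by_cases hk : k < N
    · have := k1 k hk
      rw [cmQ_mk h] at this
      obtain ⟨B, hB⟩ := Quotient.exact this
      exact ⟨B, fun _ => hB⟩
    · exact ⟨0, fun hk' => absurd hk' hk⟩
  choose B hB using k1'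
  refine ⟨|B0| + ∑ k ∈ Finset.range N, |B k|, by positivity, ?_⟩
  intro σ hσ u v x' y' hx hy
  obtain rfl : x' = x (⟨σ, hσ⟩, u, v) := funext hx
  obtain rfl : y' = y (⟨σ, hσ⟩, u, v) := funext hy
  refine ⟨fun k hk => ?_, ?_⟩
  · refine (hB k hk (⟨σ, hσ⟩, u, v)).trans ?_
    have h1 := Finset.single_le_sum (f := fun k => |B k|) (fun i _ => abs_nonneg (B i))
      (Finset.mem_range.mpr hk)
    have h2 := le_abs_self (B k)
    have h3 := abs_nonneg B0
    linarith
  · refine (hB0 (⟨σ, hσ⟩, u, v)).trans ?_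
    have h1 : 0 ≤ ∑ k ∈ Finset.range N, |B k| := by positivity
    linarith [le_abs_self B0]

lemma cm_chain {X : Type*} [MetricSpace X]
    (hqg : ∃ L C : ℝ, 0 < L ∧ 0 < C ∧ ∀ x y : X, ∃ γ : ℝ → X,
      γ 0 = x ∧ γ (dist x y) = y ∧
      ∀ s ∈ Set.Icc (0 : ℝ) (dist x y), ∀ t ∈ Set.Icc (0 : ℝ) (dist x y),
        L⁻¹ * |s - t| - C ≤ dist (γ s) (γ t) ∧ dist (γ s) (γ t) ≤ L * |s - t| + C) :
    ∃ S : ℝ, ∀ x y : X, ∃ w : ℕ → X, ∃ J : ℕ, w 0 = x ∧ w J = y ∧ (J : ℝ) ≤ dist x y + 1 ∧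
      ∀ j, dist (w j) (w (j + 1)) ≤ S := by
  obtain ⟨L, C, hL, hC, hg⟩ := hqg
  refine ⟨L + C, fun x y => ?_⟩
  obtain ⟨γ, h0, h1, h2⟩ := hg x y
  have hd : 0 ≤ dist x y := dist_nonneg
  refine ⟨fun j => γ (min (j : ℝ) (dist x y)), ⌈dist x y⌉₊, ?_, ?_, ?_, ?_⟩
  · simp [h0]
  · simp only
    rw [min_eq_right (Nat.le_ceil _), h1]
  · exact (Nat.ceil_lt_add_one hd).le
  · intro j
    have hmem : ∀ i : ℕ, min (i : ℝ) (dist x y) ∈ Set.Icc (0 : ℝ) (dist x y) := fun i =>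
      ⟨le_min (Nat.cast_nonneg i) hd, min_le_right _ _⟩
    refine (h2 _ (hmem j) _ (hmem (j + 1))).2.trans ?_
    have : |min (j : ℝ) (dist x y) - min ((j + 1 : ℕ) : ℝ) (dist x y)| ≤ 1 := by
      push_cast
      rw [abs_le]
      constructor <;> rcases min_cases (j : ℝ) (dist x y) with ⟨h, h'⟩ | ⟨h, h'⟩ <;>
        rcases min_cases ((j : ℝ) + 1) (dist x y) with ⟨h'', h'''⟩ | ⟨h'', h'''⟩ <;> linarith
    nlinarith

lemma cm_affine {X : Type*} [MetricSpace X] {μ : X → X → X → X} {ρ : ℝ → ℝ} {κ₄ : ℝ}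
    (h : IsCoarseMedianSpace μ ρ κ₄) {S : ℝ}
    (hS : ∀ x y : X, ∃ w : ℕ → X, ∃ J : ℕ, w 0 = x ∧ w J = y ∧ (J : ℝ) ≤ dist x y + 1 ∧
      ∀ j, dist (w j) (w (j + 1)) ≤ S) :
    ∃ K : ℝ, 1 ≤ K ∧
      (∀ a a' b b' c : X, dist (μ a b c) (μ a' b' c) ≤
        K * (dist a a' + 1) + K * (dist b b' + 1)) ∧
      (∀ z e : X, ∀ M : ℝ, 0 ≤ M → M ≤ dist z e → ∃ u, M ≤ dist z (μ z u e) ∧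
        dist z (μ z u e) ≤ M + K) := by
  have step : ∀ a a' b c : X, dist a a' ≤ S → dist (μ a b c) (μ a' b c) ≤ max 1 (ρ S) := by
    intro a a' b c haa
    refine (h.C1 _ _ _ _ _ _).trans (le_trans (h.ρ_mono ?_) (le_max_right _ _))
    simpa using haa
  have aff : ∀ a a' b c : X, dist (μ a b c) (μ a' b c) ≤ max 1 (ρ S) * (dist a a' + 1) := by
    intro a a' b c
    obtain ⟨w, J, h0, hJ, hle, hw⟩ := hS a a'
    have : ∀ j : ℕ, dist (μ (w 0) b c) (μ (w j) b c) ≤ max 1 (ρ S) * j := by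
      intro j
      induction j with
      | zero => simp
      | succ j ih =>
        refine (dist_triangle _ (μ (w j) b c) _).trans ?_
        have := step (w j) (w (j + 1)) b c (hw j)
        push_cast
        linarith
    have h1 := this J
    rw [h0, hJ] at h1
    exact h1.trans (mul_le_mul_of_nonneg_left hle (by positivity))
  refine ⟨max 1 (ρ S), le_max_left _ _, ?_, ?_⟩
  · intro a a' b b' c
    refine (dist_triangle _ (μ a' b c) _).trans (add_le_add (aff _ _ _ _) ?_)
    rw [h.M2₂ a' b, h.M2₂ a' b']
    exact aff _ _ _ _
  · intro z e M hM hMe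
    obtain ⟨w, J, h0, hJ, -, hw⟩ := hS z e
    have hex : ∃ j, M ≤ dist z (μ z (w j) e) := by
      refine ⟨J, ?_⟩
      rw [hJ, h.M2₂, h.M2₁, h.M1]; exact hMe
    classical
    refine ⟨w (Nat.find hex), Nat.find_spec hex, ?_⟩
    have hK : (1 : ℝ) ≤ max 1 (ρ S) := le_max_left _ _
    rcases hj : Nat.find hex with _ | j
    · rw [h0, h.M1, dist_self]; linarith
    · have hlt := Nat.find_min hex (m := j) (by omega)
      push Not at hlt
      refine (dist_triangle _ (μ z (w j) e) _).trans (add_le_add hlt.le ?_)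
      rw [h.M2₂ z, h.M2₂ z]
      exact step _ _ _ _ (hw j)

/-- a uniformly discrete, quasi-geodesic coarse median space with
bounded geometry whose intervals grow slower than `r^{n+1}` has rank at most
`n`, in the coarse-cube sense: images of `(n+1)`-cubes have an edge at the
origin of uniformly bounded length. -/
theorem stmt14 {X : Type*} [MetricSpace X] (μ : X → X → X → X)
    (ρ : ℝ → ℝ) (κ₄ : ℝ) (h : IsCoarseMedianSpace μ ρ κ₄)
    -- uniformly discrete:
    (hud : ∃ ε : ℝ, 0 < ε ∧ ∀ x y : X, x ≠ y → ε < dist x y)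
    -- bounded geometry:
    (hbg : ∀ r : ℝ, 0 < r → ∃ N : ℕ, ∀ x : X,
      (Metric.closedBall x r).Finite ∧ (Metric.closedBall x r).ncard ≤ N)
    -- quasi-geodesic:
    (hqg : ∃ L C : ℝ, 0 < L ∧ 0 < C ∧ ∀ x y : X, ∃ γ : ℝ → X,
      γ 0 = x ∧ γ (dist x y) = y ∧
      ∀ s ∈ Set.Icc (0 : ℝ) (dist x y), ∀ t ∈ Set.Icc (0 : ℝ) (dist x y),
        L⁻¹ * |s - t| - C ≤ dist (γ s) (γ t) ∧ dist (γ s) (γ t) ≤ L * |s - t| + C)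
    (n : ℕ) (p : ℝ → ℝ)
    -- p(r)/r^{n+1} → 0 as r → ∞:
    (hp : Filter.Tendsto (fun r : ℝ => p r / r ^ (n + 1)) Filter.atTop (nhds 0))
    -- card [a,b] ≤ p(d(a,b)):
    (hcard : ∀ a b : X, ((cmInterval μ a b).ncard : ℝ) ≤ p (dist a b)) :
    ∀ L : ℝ, 0 < L → ∃ C : ℝ, 0 < C ∧
      ∀ σ : (Fin (n + 1) → Bool) → X,
        (∀ u v w : Fin (n + 1) → Bool,
          dist (μ (σ u) (σ v) (σ w)) (σ (cubeMedian u v w)) ≤ L) →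
        ∃ i : Fin (n + 1),
          dist (σ (fun j => if j = i then true else false)) (σ (fun _ => false)) ≤ C := by
  intro L hL
  obtain ⟨S, hS⟩ := cm_chain hqg
  obtain ⟨K, hK1, haff, hpath⟩ := cm_affine h hS
  obtain ⟨B, hB0, hB⟩ := coarse_main h (n + 1) L
  -- finiteness of intervals
  have hfin : ∀ a b : X, (cmInterval μ a b).Finite := by
    intro a b
    obtain ⟨_, hN⟩ := hbg (max 1 (ρ (dist a b))) (by positivity)
    refine (hN a).1.subset ?_
    rintro c ⟨x, rfl⟩
    rw [Metric.mem_closedBall]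
    have h1 := h.C1 a a x x b a
    rw [h.M2₁ a x a, h.M1, dist_self, dist_self, zero_add, zero_add, dist_comm b a] at h1
    exact h1.trans (le_max_right _ _)
  -- size of folds
  have hsize : ∀ k : ℕ, ∃ A : ℝ, 0 ≤ A ∧ ∀ (z t : X) (x : ℕ → X) (r : ℝ), 0 ≤ r →
      (∀ j < k, dist z (x j) ≤ r) → dist z (cmFold μ z t x k) ≤ A * (r + 1) := by
    intro k
    induction k with
    | zero => exact ⟨0, le_rfl, fun z t x r _ _ => by simp [cmFold]⟩
    | succ k ih =>
      obtain ⟨A, hA, hA'⟩ := ih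
      refine ⟨K * A + K + K, by positivity, fun z t x r hr hx => ?_⟩
      have h1 := hA' z t x r hr (fun j hj => hx j (by omega))
      have h2 := hx k (by omega)
      have h3 := haff z (cmFold μ z t x k) z (x k) t
      rw [h.M1] at h3
      simp only [cmFold]
      have h4 : K * (dist z (cmFold μ z t x k) + 1) ≤ K * (A * (r + 1) + 1) := by gcongr
      have h5 : K * (dist z (x k) + 1) ≤ K * (r + 1) := by gcongr
      nlinarith
  obtain ⟨A₀, hA₀, hsz₀⟩ := hsize (n + 1)
  set A := A₀ + 1 with hAdef
  have hA : 0 < A := by positivity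
  set D := 2 * B + (K * (2 * B + 1) + K) + K + 1 with hD
  have hDpos : 0 < D := by positivity
  set G := A * (D + K + 1) with hG
  have hGpos : 0 < G := by positivity
  have hev : ∀ᶠ r in Filter.atTop, p r / r ^ (n + 1) < 1 / G ^ (n + 1) :=
    hp.eventually (gt_mem_nhds (by positivity))
  obtain ⟨R₀, hR₀⟩ := Filter.eventually_atTop.mp hev
  obtain ⟨m, hm⟩ := exists_nat_ge ((B + K * (|R₀| + 1 + 1) + K) / D)
  rw [div_le_iff₀ hDpos] at hm
  refine ⟨m * D + 1, by positivity, fun σ hσ => ?_⟩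
  by_contra hcon
  push Not at hcon
  set z := σ fun _ => false with hz
  set t := σ fun _ => true with ht
  have hedge : ∀ k < n + 1, (m : ℝ) * D ≤ dist z (σ (cmE (n + 1) k)) := by
    intro k hk
    have h1 := hcon ⟨k, hk⟩
    have h2 : (fun j : Fin (n + 1) => if j = ⟨k, hk⟩ then true else false) = cmE (n + 1) k := by
      funext j
      by_cases hj : j.val = k <;> simp [cmE, Fin.ext_iff, hj]
    rw [h2, dist_comm] at h1
    linarith
  have hu : ∀ k, ∃ u, k < n + 1 → (m : ℝ) * D ≤ dist z (μ z u (σ (cmE (n + 1) k))) ∧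
      dist z (μ z u (σ (cmE (n + 1) k))) ≤ m * D + K := by
    intro k
    by_cases hk : k < n + 1
    · obtain ⟨u, hu⟩ := hpath z (σ (cmE (n + 1) k)) (m * D) (by positivity) (hedge k hk)
      exact ⟨u, fun _ => hu⟩
    · exact ⟨z, fun hk' => absurd hk' hk⟩
  choose u hu using hu
  set x : ℕ → X := fun k => μ z (u k) (σ (cmE (n + 1) k)) with hx
  have hv : ∀ k j : ℕ, ∃ v, k < n + 1 → j ≤ m → (j : ℝ) * D ≤ dist z (μ z v (x k)) ∧
      dist z (μ z v (x k)) ≤ j * D + K := by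
    intro k j
    by_cases hk : k < n + 1 ∧ j ≤ m
    · have hjm : (j : ℝ) ≤ m := by exact_mod_cast hk.2
      have : (j : ℝ) * D ≤ dist z (x k) :=
        (mul_le_mul_of_nonneg_right hjm hDpos.le).trans (hu k hk.1).1
      obtain ⟨v, hv⟩ := hpath z (x k) (j * D) (by positivity) this
      exact ⟨v, fun _ _ => hv⟩
    · exact ⟨z, fun hk' hj' => absurd ⟨hk', hj'⟩ hk⟩
  choose v hv using hv
  -- the far corner
  set b := cmFold μ z t x (n + 1) with hb
  have hub : dist z b ≤ A * (m * D + K + 1) := by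
    have h1 := hsz₀ z t x (m * D + K) (by positivity) (fun j hj => (hu j hj).2)
    refine h1.trans (mul_le_mul_of_nonneg_right ?_ (by positivity))
    linarith
  have hlb : |R₀| + 1 ≤ dist z b := by
    have h1 := (hB σ hσ u x x x (fun _ => rfl)
      (fun k => by rw [h.M2₂, h.M2₁, h.M1])).1 0 (by omega)
    have h2 := haff z z z b (σ (cmE (n + 1) 0))
    rw [h.M1, dist_self] at h2
    have h3 := (hu 0 (by omega)).1
    have h4 := dist_triangle z (μ z b (σ (cmE (n + 1) 0))) (x 0)
    have h5 : (m : ℝ) * D ≤ dist z (x 0) := h3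
    have h6 : dist (μ z b (σ (cmE (n + 1) 0))) (x 0) ≤ B := h1
    have h7 : K * (|R₀| + 1 + 1) ≤ K * (dist z b + 1) := by linarith
    have h8 := le_of_mul_le_mul_left h7 (by linarith)
    linarith
  -- the grid
  let y : (Fin (n + 1) → Fin (m + 1)) → ℕ → X := fun c k =>
    μ z (v k (if hk : k < n + 1 then (c ⟨k, hk⟩).val else 0)) (x k)
  let g : (Fin (n + 1) → Fin (m + 1)) → X := fun c => μ z (cmFold μ z t (y c) (n + 1)) b
  have hy : ∀ c (k : Fin (n + 1)), ((c k).val : ℝ) * D ≤ dist z (y c k.val) ∧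
      dist z (y c k.val) ≤ (c k).val * D + K := by
    intro c k
    have := hv k.val (c k).val k.2 (by have := (c k).2; omega)
    simp only [y, dif_pos k.2]
    exact this
  have hBy := fun c => hB σ hσ u _ x (y c) (fun _ => rfl) (fun _ => rfl)
  have hclose : ∀ c c', g c = g c' → ∀ k : Fin (n + 1),
      dist (y c k.val) (y c' k.val) ≤ 2 * B + (K * (2 * B + 1) + K) := by
    intro c c' hgg k
    obtain ⟨h1, h2⟩ := hBy c
    obtain ⟨h1', h2'⟩ := hBy c'
    have h1 := h1 k.val k.2
    have h1' := h1' k.val k.2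
    change dist (g c) _ ≤ B at h2
    change dist (g c') _ ≤ B at h2'
    rw [← hgg] at h2'
    have h3 : dist (cmFold μ z t (y c) (n + 1)) (cmFold μ z t (y c') (n + 1)) ≤ 2 * B := by
      refine (dist_triangle_left _ _ (g c)).trans ?_
      linarith
    have h4 := haff z z (cmFold μ z t (y c) (n + 1)) (cmFold μ z t (y c') (n + 1))
      (σ (cmE (n + 1) k.val))
    rw [dist_self] at h4
    have h5 : K * (dist (cmFold μ z t (y c) (n + 1)) (cmFold μ z t (y c') (n + 1)) + 1) ≤
      K * (2 * B + 1) := by gcongr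
    have h6 := dist_triangle4_left (μ z (cmFold μ z t (y c) (n + 1)) (σ (cmE (n + 1) k.val)))
      (μ z (cmFold μ z t (y c') (n + 1)) (σ (cmE (n + 1) k.val))) (y c k.val) (y c' k.val)
    linarith
  have hlt : ∀ c c', g c = g c' → ∀ k, ¬ (c k < c' k) := by
    intro c c' hgg k hlt
    have h1 := hclose c c' hgg k
    have h2 := (hy c k).2
    have h3 := (hy c' k).1
    have h4 : ((c k).val : ℝ) + 1 ≤ (c' k).val := by exact_mod_cast hlt
    have h5 := mul_le_mul_of_nonneg_right h4 hDpos.le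
    have h6 := dist_triangle z (y c k.val) (y c' k.val)
    linarith
  have hinj : Function.Injective g := by
    intro c c' hgg
    funext k
    exact le_antisymm (not_lt.mp (hlt c' c hgg.symm k)) (not_lt.mp (hlt c c' hgg k))
  have hcount : (m + 1) ^ (n + 1) ≤ (cmInterval μ z b).ncard := by
    have h1 : (Set.range g) ⊆ cmInterval μ z b := by
      rintro _ ⟨c, rfl⟩
      exact ⟨_, rfl⟩
    have h2 := Set.ncard_le_ncard h1 (hfin z b)
    rw [← Set.image_univ, Set.ncard_image_of_injective _ hinj, Set.ncard_univ] at h2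
    simpa using h2
  have hs0 : 0 < dist z b := lt_of_lt_of_le (by positivity) hlb
  have h1 := hR₀ (dist z b) (by linarith [le_abs_self R₀])
  rw [div_lt_div_iff₀ (by positivity) (by positivity), one_mul] at h1
  have h2 : ((m + 1 : ℝ)) ^ (n + 1) ≤ p (dist z b) := by
    refine le_trans ?_ (hcard z b)
    exact_mod_cast hcount
  have h3 : dist z b ≤ (m + 1) * G := by
    refine hub.trans ?_
    have hm0 : (0 : ℝ) ≤ m := Nat.cast_nonneg m
    have : (m : ℝ) * D + K + 1 ≤ (m + 1) * (D + K + 1) := by nlinarith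
    calc A * (m * D + K + 1) ≤ A * ((m + 1) * (D + K + 1)) := by gcongr
      _ = (m + 1) * G := by rw [hG]; ring
  have h4 : dist z b ^ (n + 1) ≤ ((m + 1) * G) ^ (n + 1) := by gcongr
  rw [mul_pow] at h4
  have h5 := mul_le_mul_of_nonneg_right h2 (by positivity : 0 ≤ G ^ (n + 1))
  linarith
end

section
/- Let (X,d,μ) be an (L,C)-quasi-geodesic coarse median space with bounded geometry. Then all intervals [a,b] are finite, and there exist constants C' > 0 and C'' > 0 such that for all a,b ∈ X: (i) for every finite chain a = x₀, x₁, …, x_n = b in X, d(a,b) ≤ C' · Σ_{i=1}^{n}(card [x_{i−1},x_i] − 1); and (ii) there exists a finite chain a = x₀, x₁, …, x_n = b with Σ_{i=1}^{n}(card [x_{i−1},x_i] − 1) < C'' · (d(a,b) + 1). Consequently the induced metric d_μ satisfies (1/C')·d(a,b) ≤ d_μ(a,b) < C''·d(a,b) + C'' for all a,b ∈ X, so d and d_μ are quasi-isometric via the identity map. -/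
/-- The cost `Σ (card [x_{i-1}, x_i] − 1)` of a chain `x₀, x₁, …, x_n`. -/
noncomputable def chainCost {X : Type*} (μ : X → X → X → X) : List X → ℕ
  | [] => 0
  | [_] => 0
  | x :: y :: rest => ((cmInterval μ x y).ncard - 1) + chainCost μ (y :: rest)

/-- `l` is a chain from `a` to `b`: it starts at `a` and ends at `b`. -/
def IsChainFrom {X : Type*} (a b : X) (l : List X) : Prop :=
  l.head? = some a ∧ l.getLast? = some b

/-- All consecutive intervals along the chain `l` are finite. -/
def FiniteIntervalChain {X : Type*} (μ : X → X → X → X) (l : List X) : Prop :=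
  ∀ p ∈ l.zip l.tail, (cmInterval μ p.1 p.2).Finite

/-- The induced metric associated to a ternary operator: the minimum of
`Σ (card [x_{i-1}, x_i] − 1)` over all finite-interval chains from `a`
to `b`. -/
noncomputable def inducedDist {X : Type*} (μ : X → X → X → X) (a b : X) : ℕ :=
  sInf {m : ℕ | ∃ l : List X,
    IsChainFrom a b l ∧ FiniteIntervalChain μ l ∧ chainCost μ l = m}

theorem aux_surj {X : Type*} [MetricSpace X] (S : Set X) (hS : S.Finite) (R : ℝ) (hR : 0 < R)
    (x y : X) (p : ℕ → X) (n : ℕ) (h0 : p 0 = x) (hn : p n = y) (hp : ∀ i, p i ∈ S)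
    (hj : ∀ i, dist (p i) (p (i + 1)) ≤ R) : dist x y ≤ R * S.ncard := by
  classical
  have key : ∀ k ∈ Finset.range (⌊dist x y / R⌋₊ + 1),
      k ∈ hS.toFinset.image (fun z => ⌊dist x z / R⌋₊) := by
    intro k hk
    have hk' : (k : ℝ) ≤ dist x y / R := by
      have : k ≤ ⌊dist x y / R⌋₊ := by simpa [Nat.lt_succ_iff] using hk
      exact (Nat.le_floor_iff (by positivity)).1 this
    have hex : ∃ i, (k : ℝ) ≤ dist x (p i) / R := ⟨n, by rw [hn]; exact hk'⟩
    refine Finset.mem_image.2 ⟨p (Nat.find hex), by simpa using hp _, ?_⟩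
    rw [Nat.floor_eq_iff (by positivity)]
    refine ⟨Nat.find_spec hex, ?_⟩
    rcases hi : Nat.find hex with _ | i
    · rw [h0]; simp; positivity
    · have hlt := Nat.find_min hex (m := i) (by omega)
      push Not at hlt
      have h1 := dist_triangle x (p i) (p (i + 1))
      have h2 := hj i
      rw [div_lt_iff₀ hR] at hlt ⊢
      nlinarith
  have hc := (Finset.card_le_card key).trans Finset.card_image_le
  rw [Finset.card_range, ← Set.ncard_eq_toFinset_card S hS] at hc
  have h3 := Nat.lt_floor_add_one (dist x y / R)
  rw [div_lt_iff₀ hR] at h3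
  have h4 : ((⌊dist x y / R⌋₊ : ℝ) + 1) ≤ S.ncard := by exact_mod_cast hc
  nlinarith

theorem aux_list {X : Type*} (μ : X → X → X → X) (N : ℕ) (n : ℕ) : ∀ (p : ℕ → X),
    (∀ i, (cmInterval μ (p i) (p (i + 1))).ncard ≤ N) →
    ∃ l : List X, IsChainFrom (p 0) (p n) l ∧ chainCost μ l ≤ N * n := by
  induction n with
  | zero => intro p _; exact ⟨[p 0], by simp [IsChainFrom], by simp [chainCost]⟩
  | succ n ih =>
    intro p hp
    obtain ⟨l, ⟨h1, h2⟩, h3⟩ := ih (fun i => p (i + 1)) (fun i => hp (i + 1))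
    rcases l with _ | ⟨z, l⟩
    · simp at h1
    · simp only [List.head?_cons, Option.some.injEq] at h1
      subst h1
      refine ⟨p 0 :: p 1 :: l, ⟨by simp, ?_⟩, ?_⟩
      · rw [List.getLast?_cons_cons]; exact h2
      · have := hp 0
        simp only [chainCost, zero_add, Nat.mul_succ] at *
        omega

theorem aux_cost {X : Type*} [MetricSpace X] (μ : X → X → X → X) (K : ℝ)
    (hK : ∀ a b : X, dist a b ≤ K * (((cmInterval μ a b).ncard - 1 : ℕ) : ℝ)) :
    ∀ (l : List X) (a b : X), IsChainFrom a b l → dist a b ≤ K * (chainCost μ l : ℝ)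
  | [], a, b, h => by simp [IsChainFrom] at h
  | [z], a, b, h => by
    obtain ⟨h1, h2⟩ := h
    simp at h1 h2
    subst h1; subst h2
    simp [chainCost]
  | x :: y :: rest, a, b, h => by
    obtain ⟨h1, h2⟩ := h
    simp only [List.head?_cons, Option.some.injEq] at h1
    subst h1
    rw [List.getLast?_cons_cons] at h2
    have ih := aux_cost μ K hK (y :: rest) y b ⟨by simp, h2⟩
    have h3 := hK x y
    have h4 := dist_triangle x y b
    simp only [chainCost]
    push_cast
    nlinarith

/-- in an `(L,C)`-quasi-geodesic coarse median space of bounded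
geometry, all intervals are finite, chain costs dominate the metric up to a
multiplicative constant `C'`, points are joined by chains of cost at most
`C''·(d(a,b)+1)`, and consequently the induced metric `d_μ` is quasi-isometric
to `d` via the identity map. -/
theorem stmt16 {X : Type*} [MetricSpace X] (μ : X → X → X → X)
    (ρ : ℝ → ℝ) (κ₄ : ℝ) (h : IsCoarseMedianSpace μ ρ κ₄)
    -- bounded geometry:
    (hbg : ∀ r : ℝ, 0 < r → ∃ N : ℕ, ∀ x : X,
      (Metric.closedBall x r).Finite ∧ (Metric.closedBall x r).ncard ≤ N)
    -- (L,C)-quasi-geodesic: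
    (L C : ℝ) (hL : 0 < L) (hC : 0 < C)
    (hqg : ∀ x y : X, ∃ γ : ℝ → X, γ 0 = x ∧ γ (dist x y) = y ∧
      ∀ s ∈ Set.Icc (0 : ℝ) (dist x y), ∀ t ∈ Set.Icc (0 : ℝ) (dist x y),
        L⁻¹ * |s - t| - C ≤ dist (γ s) (γ t) ∧ dist (γ s) (γ t) ≤ L * |s - t| + C) :
    (∀ a b : X, (cmInterval μ a b).Finite) ∧
    ∃ C' : ℝ, 0 < C' ∧ ∃ C'' : ℝ, 0 < C'' ∧
      -- (i) every finite chain from a to b satisfies d(a,b) ≤ C' · (its cost):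
      (∀ (a b : X) (l : List X), IsChainFrom a b l →
        dist a b ≤ C' * (chainCost μ l : ℝ)) ∧
      -- (ii) some chain from a to b has cost < C''·(d(a,b)+1):
      (∀ a b : X, ∃ l : List X, IsChainFrom a b l ∧
        (chainCost μ l : ℝ) < C'' * (dist a b + 1)) ∧
      -- consequently d and d_μ are quasi-isometric via the identity:
      (∀ a b : X, (1 / C') * dist a b ≤ (inducedDist μ a b : ℝ) ∧
        (inducedDist μ a b : ℝ) < C'' * dist a b + C'') := by
  have hmid : ∀ a b : X, μ a b a = a := fun a b => by rw [h.M2₁, h.M1]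
  have hsub : ∀ (a b : X) (D : ℝ), dist a b ≤ D →
      cmInterval μ a b ⊆ Metric.closedBall a (max (ρ D) 1) := by
    rintro a b D hD c ⟨x, rfl⟩
    have h1 := h.C1 a a x x b a
    rw [hmid] at h1
    simp only [dist_self, zero_add] at h1
    rw [Metric.mem_closedBall]
    refine h1.trans ((h.ρ_mono ?_).trans (le_max_left _ _))
    rwa [dist_comm]
  have hfin : ∀ a b : X, (cmInterval μ a b).Finite := by
    intro a b
    obtain ⟨N, hN⟩ := hbg (max (ρ (dist a b)) 1) (by positivity)
    exact (hN a).1.subset (hsub a b _ le_rfl)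
  -- discrete quasi-geodesics
  have hpath : ∀ a b : X, ∃ p : ℕ → X, p 0 = a ∧ p ⌈dist a b⌉₊ = b ∧
      ∀ i, dist (p i) (p (i + 1)) ≤ L + C := by
    intro a b
    obtain ⟨γ, h0, h1, hγ⟩ := hqg a b
    refine ⟨fun i => γ (min i (dist a b)), ?_, ?_, ?_⟩
    · simp [h0]
    · simp only; rw [min_eq_right (Nat.le_ceil _), h1]
    · intro i
      have hd : 0 ≤ dist a b := dist_nonneg
      have hm : ∀ i : ℕ, min (i : ℝ) (dist a b) ∈ Set.Icc (0 : ℝ) (dist a b) := fun i =>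
        ⟨le_min (by positivity) hd, min_le_right _ _⟩
      refine (hγ _ (hm i) _ (hm (i + 1))).2.trans ?_
      have : |min (i : ℝ) (dist a b) - min ((i + 1 : ℕ) : ℝ) (dist a b)| ≤ 1 := by
        refine (abs_min_sub_min_le_max _ _ _ _).trans ?_
        push_cast
        simp
      nlinarith
  set R : ℝ := max (ρ (L + C)) 1 with hRdef
  have hR : 0 < R := by positivity
  have hK : ∀ a b : X, dist a b ≤ (2 * R) * (((cmInterval μ a b).ncard - 1 : ℕ) : ℝ) := by
    intro a b
    rcases eq_or_ne a b with rfl | hab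
    · rw [dist_self]; positivity
    obtain ⟨p, h0, hn, hp⟩ := hpath a b
    have ha : μ a a b = a := h.M1 a b
    have hb : μ a b b = b := by rw [h.M2₂, h.M2₁, h.M1]
    have h1 := aux_surj (cmInterval μ a b) (hfin a b) R hR a b (fun i => μ a (p i) b)
      ⌈dist a b⌉₊ (by simp only [h0, ha]) (by simp only [hn, hb]) (fun i => ⟨_, rfl⟩) (by
        intro i
        refine (h.C1 a a (p i) (p (i + 1)) b b).trans ?_
        simp only [dist_self, zero_add, add_zero]
        exact (h.ρ_mono (hp i)).trans (le_max_left _ _))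
    have h2 : 1 < (cmInterval μ a b).ncard := by
      rw [Set.one_lt_ncard (hfin a b)]
      exact ⟨a, ⟨a, ha.symm⟩, b, ⟨b, hb.symm⟩, hab⟩
    obtain ⟨m, hm⟩ : ∃ m, (cmInterval μ a b).ncard = m + 2 := ⟨_, by
      exact (Nat.sub_add_cancel h2).symm⟩
    rw [hm] at h1 ⊢
    rw [show m + 2 - 1 = m + 1 by omega]
    push_cast at h1 ⊢
    have hm0 : (0 : ℝ) ≤ m := by positivity
    nlinarith [mul_nonneg hR.le hm0]
  obtain ⟨N, hN⟩ := hbg R hR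
  have hi : ∀ (a b : X) (l : List X), IsChainFrom a b l →
      dist a b ≤ (2 * R) * (chainCost μ l : ℝ) := fun a b l hl => aux_cost μ _ hK l a b hl
  have hii : ∀ a b : X, ∃ l : List X, IsChainFrom a b l ∧
      (chainCost μ l : ℝ) < (N + 1 : ℝ) * (dist a b + 1) := by
    intro a b
    obtain ⟨p, h0, hn, hp⟩ := hpath a b
    obtain ⟨l, hl, hc⟩ := aux_list μ N ⌈dist a b⌉₊ p (fun i =>
      (Set.ncard_le_ncard (hsub _ _ _ (hp i)) (hN _).1).trans (hN _).2)
    rw [h0, hn] at hl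
    refine ⟨l, hl, ?_⟩
    have h1 : (chainCost μ l : ℝ) ≤ N * ⌈dist a b⌉₊ := by exact_mod_cast hc
    have hd : 0 ≤ dist a b := dist_nonneg
    have h2 := Nat.ceil_lt_add_one hd
    have h3 : (0 : ℝ) ≤ N := by positivity
    nlinarith
  refine ⟨hfin, 2 * R, by positivity, N + 1, by positivity, hi, hii, ?_⟩
  intro a b
  obtain ⟨l, hl, hc⟩ := hii a b
  have hmem : chainCost μ l ∈ {m : ℕ | ∃ l : List X,
    IsChainFrom a b l ∧ FiniteIntervalChain μ l ∧ chainCost μ l = m} :=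
    ⟨l, hl, fun _ _ => hfin _ _, rfl⟩
  constructor
  · obtain ⟨l', hl', -, hc'⟩ := Nat.sInf_mem ⟨_, hmem⟩
    have h1 := hi a b l' hl'
    rw [hc'] at h1
    rw [one_div, inv_mul_le_iff₀ (by positivity)]
    exact h1
  · have h1 : inducedDist μ a b ≤ chainCost μ l := Nat.sInf_le hmem
    have h2 : (inducedDist μ a b : ℝ) ≤ chainCost μ l := by exact_mod_cast h1
    linarith
end

section
/- Let (X,μ) be a ternary algebra of bounded valency. Then (X,μ) admits a metric d such that (X,d,μ) is a coarse median space of bounded geometry if and only if (X,μ) is a coarse median algebra, i.e. all intervals [a,b] are finite, μ satisfies (M1) μ(a,a,b) = a and (M2) μ(a,b,c) = μ(a,c,b) = μ(b,a,c), and (M3)' there is a constant K ≥ 0 such that the interval [μ(a,b,μ(c,d,e)), μ(μ(a,b,c),μ(a,b,d),e)] has cardinality at most K for all a,b,c,d,e ∈ X. -/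
/-- `D` is a metric (distance function) on `X`. -/
structure IsMetricD {X : Type*} (D : X → X → ℝ) : Prop where
  self : ∀ x, D x x = 0
  eq_of_dist_eq_zero : ∀ x y, D x y = 0 → x = y
  symm : ∀ x y, D x y = D y x
  triangle : ∀ x y z, D x z ≤ D x y + D y z

/-- `(X, D, μ)` is a coarse median space: `μ` satisfies (M1), (M2), (C1)
and (C2) with respect to the distance function `D`. -/
def IsCoarseMedianSpaceWith {X : Type*} (D : X → X → ℝ) (μ : X → X → X → X) : Prop :=
  (∀ a b : X, μ a a b = a) ∧
  (∀ a b c : X, μ a b c = μ a c b) ∧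
  (∀ a b c : X, μ a b c = μ b a c) ∧
  (∃ ρ : ℝ → ℝ, Monotone ρ ∧ ∀ a a' b b' c c' : X,
    D (μ a b c) (μ a' b' c') ≤ ρ (D a a' + D b b' + D c c')) ∧
  (∃ κ₄ : ℝ, 0 ≤ κ₄ ∧ ∀ a b c d : X,
    D (μ (μ a b c) b d) (μ a b (μ c b d)) ≤ κ₄)

/-- `D` has bounded geometry: balls of each radius have uniformly bounded
cardinality. -/
def BoundedGeometryWith {X : Type*} (D : X → X → ℝ) : Prop :=
  ∀ r : ℝ, 0 < r → ∃ N : ℕ, ∀ x : X,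
    {y : X | D x y ≤ r}.Finite ∧ {y : X | D x y ≤ r}.ncard ≤ N

/-- A ternary algebra has bounded valency if the number of points `y` whose
interval `[x,y]` has at most `R` points is uniformly bounded by `φ R`. -/
def BoundedValency {X : Type*} (μ : X → X → X → X) : Prop :=
  ∃ φ : ℕ → ℕ, ∀ (x : X) (R : ℕ),
    {y : X | (cmInterval μ x y).Finite ∧ (cmInterval μ x y).ncard ≤ R}.Finite ∧
    {y : X | (cmInterval μ x y).Finite ∧ (cmInterval μ x y).ncard ≤ R}.ncard ≤ φ R

namespace MedAux

section Exact

variable {Y : Type*} (m : Y → Y → Y → Y)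
  (h1 : ∀ a b, m a a b = a) (h2 : ∀ a b c, m a b c = m a c b)
  (h3 : ∀ a b c, m a b c = m b a c)
  (h4 : ∀ a b c d, m (m a b c) b d = m a b (m c b d))

/-- Betweenness: `x` lies in the interval `[a,b]`. -/
def Bt (a x b : Y) : Prop := m a x b = x

include h2 h3 in
theorem Bt.symm {a x b : Y} (h : Bt m a x b) : Bt m b x a := by
  unfold Bt at *
  rw [h3 b x a, h2 x b a, h3 x a b, h]

include h2 h3 h1 h4 in
theorem bt_mem (a b c : Y) : Bt m a (m a b c) b := by
  unfold Bt
  have := h4 b a b c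
  rw [h2 b a b, h1] at this
  rw [h2 a _ b, h3 a b c, h3 a b, ← this]

include h2 h3 h4 in
theorem bt_trans1 {x p w y : Y} (hp : Bt m x p w) (hw : Bt m x w y) : Bt m x p y := by
  unfold Bt at *
  have := h4 p x w y
  rw [h3 p x w, hp, h3 w x y, hw, h3 p x w, hp, h3 p x y] at this
  exact this

include h1 h2 h3 h4 in
theorem bt_trans2 {x p w y : Y} (hp : Bt m x p w) (hw : Bt m x w y) : Bt m p w y := by
  unfold Bt at *
  -- base `w`
  have := h4 p w x y
  rw [hw] at this
  have e1 : m p w x = p := by rw [h2 p w x, h3 p x w, hp]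
  have e2 : m p w w = w := by rw [h3 p w w, h2 w p w, h1]
  rw [e1, e2] at this
  exact this

include h2 h3 h4 in
theorem bt_meet {b z a c : Y} (ha : Bt m b z a) (hc : Bt m b z c) : Bt m b z (m a b c) := by
  unfold Bt at *
  have := h4 z b a c
  rw [h3 z b a, ha, h3 z b c, hc, h3 z b] at this
  exact this.symm

include h2 in
theorem bt_antisymm {s p q : Y} (ha : Bt m s p q) (hc : Bt m s q p) : p = q := by
  unfold Bt at *
  rw [← ha, h2, hc]

include h1 h2 h3 h4 in
theorem bt_uniq {a b c z : Y} (hab : Bt m a z b) (hbc : Bt m b z c) (hac : Bt m a z c) :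
    z = m a b c := by
  have k1 : Bt m b z (m a b c) := bt_meet m h2 h3 h4 (hab.symm m h2 h3) hbc
  have k2 : Bt m a z (m a b c) := by
    have := bt_meet m h2 h3 h4 hab hac
    rwa [h3 b a c] at this
  have k3 : Bt m a (m a b c) b := bt_mem m h1 h2 h3 h4 a b c
  have := bt_meet m h2 h3 h4 (k2.symm m h2 h3) (k1.symm m h2 h3)
  unfold Bt at this k3
  rw [k3] at this
  rw [← this, h2, h1]

include h1 h2 h3 h4 in
theorem bt_gate {a b x : Y} (w : Y) (hx : Bt m a x b) : Bt m w (m a w b) x := by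
  have sy : ∀ {a x b : Y}, Bt m a x b → Bt m b x a := fun h => h.symm m h2 h3
  have t1 : ∀ {x p w y : Y}, Bt m x p w → Bt m x w y → Bt m x p y := bt_trans1 m h2 h3 h4
  have t2 : ∀ {x p w y : Y}, Bt m x p w → Bt m x w y → Bt m p w y := bt_trans2 m h1 h2 h3 h4
  have mem12 : ∀ a b c : Y, Bt m a (m a b c) b := bt_mem m h1 h2 h3 h4
  have mem13 : ∀ a b c : Y, Bt m a (m a b c) c := fun a b c => by rw [h2]; exact mem12 a c b
  have mem23 : ∀ a b c : Y, Bt m b (m a b c) c := fun a b c => by rw [h3]; exact mem13 b a c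
  obtain ⟨p, hp⟩ : ∃ p, p = m a w b := ⟨_, rfl⟩
  rw [← hp]
  have paw : Bt m a p w := hp ▸ mem12 a w b
  have pab : Bt m a p b := hp ▸ mem13 a w b
  have pwb : Bt m w p b := hp ▸ mem23 a w b
  obtain ⟨q, hq⟩ : ∃ q, q = m p w x := ⟨_, rfl⟩
  have qpw : Bt m p q w := hq ▸ mem12 p w x
  have qpx : Bt m p q x := hq ▸ mem13 p w x
  have qwx : Bt m w q x := hq ▸ mem23 p w x
  -- p in [a,q], [b,q]
  have paq : Bt m a p q := sy (t2 (sy qpw) (sy paw))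
  have pbq : Bt m b p q := sy (t2 (sy qpw) pwb)
  obtain ⟨s, hs⟩ : ∃ s, s = m x p a := ⟨_, rfl⟩
  obtain ⟨t, ht⟩ : ∃ t, t = m x p b := ⟨_, rfl⟩
  have sxp : Bt m x s p := hs ▸ mem12 x p a
  have sxa : Bt m x s a := hs ▸ mem13 x p a
  have spa : Bt m p s a := hs ▸ mem23 x p a
  have txp : Bt m x t p := ht ▸ mem12 x p b
  have txb : Bt m x t b := ht ▸ mem13 x p b
  have tpb : Bt m p t b := ht ▸ mem23 x p b
  have psq : Bt m s p q := t2 (sy spa) paq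
  have ptq : Bt m t p q := t2 (sy tpb) pbq
  -- x in [s,t], p in [s,t]
  have xsb : Bt m s x b := t2 (sy sxa) hx
  have xst : Bt m s x t := sy (t2 (sy txb) (sy xsb))
  have psb : Bt m s p b := t2 (sy spa) pab
  have pst : Bt m s p t := sy (t2 (sy tpb) (sy psb))
  have pm : p = m q s t := bt_uniq m h1 h2 h3 h4 (sy psq) pst (sy ptq)
  -- s in [q,x]
  have sqx : Bt m q s x := by
    obtain ⟨r, hr⟩ : ∃ r, r = m q s x := ⟨_, rfl⟩
    have r1 : Bt m s r q := sy (hr ▸ mem12 q s x)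
    have r2 : Bt m s r x := hr ▸ mem23 q s x
    have r3 : Bt m s r t := t1 r2 xst
    have r4 : Bt m s r p := by
      have := bt_meet m h2 h3 h4 r1 r3
      rwa [← pm] at this
    have r5 := bt_meet m h2 h3 h4 r4 r2
    have e : m p s x = s := sy sxp
    rw [e] at r5
    have : r = s := by
      unfold Bt at r5
      rw [← r5, h2, h1]
    rw [← this]
    exact hr ▸ mem13 q s x
  have qsp : Bt m s q p := t2 (sy sqx) (sy qpx)
  have : p = q := bt_antisymm m h2 psq qsp
  rw [this]
  exact qwx

include h1 h2 h3 h4 in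
theorem bt_convex {a b x y w : Y} (hx : Bt m a x b) (hy : Bt m a y b) (hw : Bt m x w y) :
    Bt m a w b := by
  have k1 := bt_gate m h1 h2 h3 h4 w hx
  have k2 := bt_gate m h1 h2 h3 h4 w hy
  have k3 := bt_meet m h2 h3 h4 k1 k2
  unfold Bt at *
  rw [hw] at k3
  rw [← k3, h2, h1]

include h1 h2 h3 h4 in
theorem bt_proj {c z d : Y} (a b : Y) (hz : Bt m c z d) :
    Bt m (m a c b) (m a z b) (m a d b) := by
  have sy : ∀ {a x b : Y}, Bt m a x b → Bt m b x a := fun h => h.symm m h2 h3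
  have t1 : ∀ {x p w y : Y}, Bt m x p w → Bt m x w y → Bt m x p y := bt_trans1 m h2 h3 h4
  have mem12 : ∀ a b c : Y, Bt m a (m a b c) b := bt_mem m h1 h2 h3 h4
  have mem13 : ∀ a b c : Y, Bt m a (m a b c) c := fun a b c => by rw [h2]; exact mem12 a c b
  have mem23 : ∀ a b c : Y, Bt m b (m a b c) c := fun a b c => by rw [h3]; exact mem13 b a c
  have gate := fun (k e : Y) (hk : Bt m a k b) => bt_gate m h1 h2 h3 h4 e hk
  have hu : Bt m a (m a c b) b := mem13 a c b
  have hv : Bt m a (m a d b) b := mem13 a d b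
  have hp : Bt m a (m a z b) b := mem13 a z b
  obtain ⟨p', hp'⟩ : ∃ q, q = m (m a c b) (m a z b) (m a d b) := ⟨_, rfl⟩
  have e13 : Bt m (m a c b) p' (m a d b) := hp' ▸ mem13 _ _ _
  have e12 : Bt m (m a c b) p' (m a z b) := hp' ▸ mem12 _ _ _
  have e23 : Bt m (m a z b) p' (m a d b) := hp' ▸ mem23 _ _ _
  have hp'ab : Bt m a p' b := bt_convex m h1 h2 h3 h4 hu hv e13
  have f1 : Bt m z (m a z b) p' := gate _ _ hp'ab
  have f2 : Bt m (m a z b) p' c := t1 (sy e12) (sy (gate _ _ hp))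
  have f3 : Bt m (m a z b) p' d := t1 e23 (sy (gate _ _ hp))
  have f4 := bt_meet m h2 h3 h4 f2 f3
  have f5 : Bt m (m a z b) p' z := t1 f4 (bt_gate m h1 h2 h3 h4 (m a z b) hz)
  have : m a z b = p' := bt_antisymm m h2 f1 (sy f5)
  unfold Bt
  rw [← hp', this]

include h1 h2 h3 h4 in
theorem five_point (a b c d e : Y) : m a b (m c d e) = m (m a b c) (m a b d) e := by
  have sy : ∀ {a x b : Y}, Bt m a x b → Bt m b x a := fun h => h.symm m h2 h3
  have t1 : ∀ {x p w y : Y}, Bt m x p w → Bt m x w y → Bt m x p y := bt_trans1 m h2 h3 h4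
  have mem12 : ∀ a b c : Y, Bt m a (m a b c) b := bt_mem m h1 h2 h3 h4
  have mem13 : ∀ a b c : Y, Bt m a (m a b c) c := fun a b c => by rw [h2]; exact mem12 a c b
  have mem23 : ∀ a b c : Y, Bt m b (m a b c) c := fun a b c => by rw [h3]; exact mem13 b a c
  rw [h2 a b (m c d e), h2 a b c, h2 a b d]
  apply bt_uniq m h1 h2 h3 h4
  · exact bt_proj m h1 h2 h3 h4 a b (mem12 c d e)
  · exact t1 (bt_proj m h1 h2 h3 h4 a b (mem23 c d e))
      (sy (bt_gate m h1 h2 h3 h4 e (mem13 a d b)))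
  · exact t1 (bt_proj m h1 h2 h3 h4 a b (mem13 c d e))
      (sy (bt_gate m h1 h2 h3 h4 e (mem13 a c b)))

end Exact

section Forward

variable {X : Type*}

/-- Sequences at bounded distance. -/
def seqSetoid (D : X → X → ℝ) (hD : IsMetricD D) : Setoid (ℕ → X) where
  r f g := ∃ C : ℝ, ∀ n, D (f n) (g n) ≤ C
  iseqv := by
    refine ⟨fun f => ⟨0, fun n => (hD.self _).le⟩, ?_, ?_⟩
    · rintro f g ⟨C, h⟩
      exact ⟨C, fun n => by rw [hD.symm]; exact h n⟩
    · rintro f g k ⟨C, h⟩ ⟨C', h'⟩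
      exact ⟨C + C', fun n => (hD.triangle _ (g n) _).trans (add_le_add (h n) (h' n))⟩

theorem coarse_five (D : X → X → ℝ) (hD : IsMetricD D) (μ : X → X → X → X)
    (h : IsCoarseMedianSpaceWith D μ) :
    ∃ C : ℝ, ∀ a b c d e, D (μ a b (μ c d e)) (μ (μ a b c) (μ a b d) e) ≤ C := by
  obtain ⟨h1, h2, h3, ⟨ρ, hρ, hC1⟩, κ, _, hC2⟩ := h
  by_contra! hcon
  have hc : ∀ n : ℕ, ∃ a b c d e, (n : ℝ) < D (μ a b (μ c d e)) (μ (μ a b c) (μ a b d) e) :=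
    fun n => hcon n
  choose a b c d e hlt using hc
  let S := seqSetoid D hD
  let M : Quotient S → Quotient S → Quotient S → Quotient S := fun x y z =>
    Quotient.mk S (fun n => μ (x.out n) (y.out n) (z.out n))
  have hM : ∀ f g k : ℕ → X, M (Quotient.mk S f) (Quotient.mk S g) (Quotient.mk S k)
      = Quotient.mk S (fun n => μ (f n) (g n) (k n)) := by
    intro f g k
    apply Quotient.sound
    obtain ⟨C1, k1⟩ := Quotient.mk_out (s := S) f
    obtain ⟨C2, k2⟩ := Quotient.mk_out (s := S) g
    obtain ⟨C3, k3⟩ := Quotient.mk_out (s := S) k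
    exact ⟨ρ (C1 + C2 + C3), fun n => (hC1 _ _ _ _ _ _).trans
      (hρ (add_le_add (add_le_add (k1 n) (k2 n)) (k3 n)))⟩
  clear_value M
  have g1 : ∀ a b, M a a b = a := by
    intro a b
    induction a using Quotient.inductionOn
    induction b using Quotient.inductionOn
    rw [hM]; simp only [h1]
  have g2 : ∀ a b c, M a b c = M a c b := by
    intro a b c
    induction a using Quotient.inductionOn
    induction b using Quotient.inductionOn
    induction c using Quotient.inductionOn
    rw [hM, hM]; congr 1; funext n; apply h2
  have g3 : ∀ a b c, M a b c = M b a c := by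
    intro a b c
    induction a using Quotient.inductionOn
    induction b using Quotient.inductionOn
    induction c using Quotient.inductionOn
    rw [hM, hM]; congr 1; funext n; apply h3
  have g4 : ∀ a b c d, M (M a b c) b d = M a b (M c b d) := by
    intro a b c d
    induction a using Quotient.inductionOn
    induction b using Quotient.inductionOn
    induction c using Quotient.inductionOn
    induction d using Quotient.inductionOn
    rw [hM, hM, hM, hM]
    exact Quotient.sound ⟨κ, fun n => hC2 _ _ _ _⟩
  have key := five_point M g1 g2 g3 g4 (Quotient.mk S a) (Quotient.mk S b) (Quotient.mk S c)
    (Quotient.mk S d) (Quotient.mk S e)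
  rw [hM, hM, hM, hM, hM] at key
  obtain ⟨C, hC⟩ := Quotient.exact key
  obtain ⟨n, hn⟩ := exists_nat_gt C
  have := hlt n
  have := hC n
  linarith

theorem interval_bound (D : X → X → ℝ) (hD : IsMetricD D) (hb : BoundedGeometryWith D)
    (μ : X → X → X → X) (h : IsCoarseMedianSpaceWith D μ) (C : ℝ) :
    ∃ N : ℕ, ∀ x y, D x y ≤ C → (cmInterval μ x y).Finite ∧ (cmInterval μ x y).ncard ≤ N := by
  obtain ⟨h1, h2, h3, ⟨ρ, hρ, hC1⟩, κ, _, hC2⟩ := h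
  obtain ⟨N, hN⟩ := hb (max (ρ C) 1) (by positivity)
  refine ⟨N, fun x y hxy => ?_⟩
  have hsub : cmInterval μ x y ⊆ {z | D x z ≤ max (ρ C) 1} := by
    rintro _ ⟨z, rfl⟩
    have := hC1 x x z z x y
    rw [h2 x z x, h1, hD.self, hD.self] at this
    exact (this.trans (hρ (by linarith))).trans (le_max_left _ _)
  exact ⟨(hN x).1.subset hsub, (Set.ncard_le_ncard hsub (hN x).1).trans (hN x).2⟩

end Forward

section Backward

variable {X : Type*}

/-- Chains of points, weighted by the cardinalities of the intervals. -/
inductive Chain (μ : X → X → X → X) : ℕ → X → X → Prop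
  | nil (x : X) : Chain μ 0 x x
  | snoc {n : ℕ} {x y : X} (z : X) (h : Chain μ n x y) :
      Chain μ (n + (cmInterval μ y z).ncard) x z

theorem Chain.append {μ : X → X → X → X} {n k : ℕ} {x y z : X} (h : Chain μ n x y)
    (h' : Chain μ k y z) : Chain μ (n + k) x z := by
  induction h' with
  | nil => exact h
  | snoc z _ ih =>
    rw [← add_assoc]
    exact (ih h).snoc z

theorem Chain.single (μ : X → X → X → X) (x y : X) : Chain μ (cmInterval μ x y).ncard x y := by
  simpa using (Chain.nil x).snoc (μ := μ) y

theorem biUnion_bound {A B : Type*} (S : Set A) (hS : S.Finite) (T : A → Set B) (N : ℕ)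
    (hT : ∀ s, (T s).Finite ∧ (T s).ncard ≤ N) :
    (⋃ s ∈ S, T s).Finite ∧ (⋃ s ∈ S, T s).ncard ≤ S.ncard * N := by
  classical
  have hf : (⋃ s ∈ S, T s).Finite := hS.biUnion (fun s _ => (hT s).1)
  refine ⟨hf, ?_⟩
  have e : (⋃ s ∈ S, T s) = ((hS.toFinset.biUnion fun s => (hT s).1.toFinset : Finset B) : Set B) := by
    ext x; simp
  rw [e, Set.ncard_coe_finset, Set.ncard_eq_toFinset_card S hS]
  apply Finset.card_biUnion_le_card_mul
  intro s _
  rw [← Set.ncard_eq_toFinset_card _ (hT s).1]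
  exact (hT s).2

theorem ball_bound (μ : X → X → X → X) (hbv : BoundedValency μ)
    (hfin : ∀ a b : X, (cmInterval μ a b).Finite) (hpos : ∀ a b, 0 < (cmInterval μ a b).ncard)
    (n : ℕ) : ∃ N : ℕ, ∀ x, {y | ∃ k ≤ n, Chain μ k x y}.Finite ∧
      {y | ∃ k ≤ n, Chain μ k x y}.ncard ≤ N := by
  obtain ⟨φ, hφ⟩ := hbv
  induction n with
  | zero =>
    refine ⟨1, fun x => ?_⟩
    have hsub : {y | ∃ k ≤ 0, Chain μ k x y} ⊆ {x} := by
      rintro y ⟨k, hk, hc⟩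
      cases hc with
      | nil => rfl
      | @snoc n _ y' _ h =>
        have := hpos y' y
        omega
    exact ⟨(Set.finite_singleton x).subset hsub,
      (Set.ncard_le_ncard hsub (Set.finite_singleton x)).trans (by simp)⟩
  | succ n ih =>
    obtain ⟨N, hN⟩ := ih
    refine ⟨1 + N * φ (n + 1), fun x => ?_⟩
    have bb := biUnion_bound {y | ∃ k ≤ n, Chain μ k x y} (hN x).1 (fun y =>
      {z : X | (cmInterval μ y z).Finite ∧ (cmInterval μ y z).ncard ≤ n + 1}) (φ (n + 1))
      (fun y => hφ y (n + 1))
    obtain ⟨T, hT⟩ : ∃ T, T = (⋃ y ∈ {y | ∃ k ≤ n, Chain μ k x y},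
      {z : X | (cmInterval μ y z).Finite ∧ (cmInterval μ y z).ncard ≤ n + 1}) := ⟨_, rfl⟩
    rw [← hT] at bb
    have hsub : {y | ∃ k ≤ n + 1, Chain μ k x y} ⊆ {x} ∪ T := by
      rintro y ⟨k, hk, hc⟩
      cases hc with
      | nil => left; rfl
      | @snoc n' _ y' _ h =>
        right
        have := hpos y' y
        rw [hT]
        simp only [Set.mem_iUnion]
        exact ⟨y', ⟨n', by omega, h⟩, hfin _ _, by omega⟩
    have hf := (Set.finite_singleton x).union bb.1
    refine ⟨hf.subset hsub, (Set.ncard_le_ncard hsub hf).trans ?_⟩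
    refine (Set.ncard_union_le _ _).trans ?_
    rw [Set.ncard_singleton]
    have := Nat.mul_le_mul_right (φ (n + 1)) (hN x).2
    omega

theorem backward (μ : X → X → X → X) (hbv : BoundedValency μ)
    (hfin : ∀ a b : X, (cmInterval μ a b).Finite)
    (h1 : ∀ a b : X, μ a a b = a)
    (h2 : ∀ a b c : X, μ a b c = μ a c b)
    (h3 : ∀ a b c : X, μ a b c = μ b a c)
    (K : ℕ) (hK : ∀ a b c d e : X,
       (cmInterval μ (μ a b (μ c d e)) (μ (μ a b c) (μ a b d) e)).ncard ≤ K) :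
    ∃ D : X → X → ℝ, IsMetricD D ∧ BoundedGeometryWith D ∧ IsCoarseMedianSpaceWith D μ := by
  classical
  have hpos : ∀ a b, 0 < (cmInterval μ a b).ncard := fun a b =>
    (Set.ncard_pos (hfin a b)).2 ⟨_, a, rfl⟩
  have hsymm : ∀ a b, cmInterval μ a b = cmInterval μ b a := by
    intro a b
    ext c
    constructor <;> rintro ⟨x, rfl⟩ <;> exact ⟨x, by rw [h3, h2, h3]⟩
  have csymm : ∀ {n x y}, Chain μ n x y → Chain μ n y x := by
    intro n x y h
    induction h with
    | nil x => exact Chain.nil x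
    | @snoc n x y z h ih =>
      have := (Chain.single μ z y).append ih
      rwa [hsymm, add_comm] at this
  let d : X → X → ℕ := fun x y => sInf {n | Chain μ n x y}
  have dmem : ∀ x y, Chain μ (d x y) x y := fun x y =>
    Nat.sInf_mem (s := {n | Chain μ n x y}) ⟨_, Chain.single μ x y⟩
  have dle : ∀ {n x y}, Chain μ n x y → d x y ≤ n := fun {n x y} h => Nat.sInf_le h
  have dself : ∀ x, d x x = 0 := fun x => Nat.le_zero.1 (dle (Chain.nil x))
  have dsymm : ∀ x y, d x y = d y x := fun x y =>
    le_antisymm (dle (csymm (dmem y x))) (dle (csymm (dmem x y)))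
  have dtri : ∀ x y z, d x z ≤ d x y + d y z := fun x y z => dle ((dmem x y).append (dmem y z))
  have hbv' := hbv
  obtain ⟨φ, hφ⟩ := hbv
  have step : ∀ b c y z, (cmInterval μ (μ y b c) (μ z b c)).ncard
      ≤ φ K * (cmInterval μ y z).ncard := by
    intro b c y z
    have bb := biUnion_bound (cmInterval μ y z) (hfin y z) (fun s =>
      {w : X | (cmInterval μ (μ b c s) w).Finite ∧ (cmInterval μ (μ b c s) w).ncard ≤ K}) (φ K)
      (fun s => hφ _ K)
    rw [mul_comm]
    refine (Set.ncard_le_ncard ?_ bb.1).trans bb.2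
    rintro _ ⟨t, rfl⟩
    simp only [Set.mem_iUnion]
    refine ⟨μ y t z, ⟨t, rfl⟩, hfin _ _, ?_⟩
    have := hK b c y z t
    have e1 : μ b c y = μ y b c := by rw [h2, h3]
    have e2 : μ b c z = μ z b c := by rw [h2, h3]
    rwa [e1, e2, h2 y z t, h2 (μ y b c) _ t] at this
  have lipc : ∀ b c {n x y}, Chain μ n x y → d (μ x b c) (μ y b c) ≤ φ K * n := by
    intro b c n x y h
    induction h with
    | nil x => rw [dself]; exact Nat.zero_le _
    | @snoc n x y z h ih =>
      have s1 := dtri (μ x b c) (μ y b c) (μ z b c)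
      have s2 := dle (Chain.single μ (μ y b c) (μ z b c))
      have s3 := step b c y z
      rw [mul_add]
      omega
  have lip : ∀ b c x y, d (μ x b c) (μ y b c) ≤ φ K * d x y := fun b c x y => lipc b c (dmem x y)
  refine ⟨fun x y => (d x y : ℝ), ⟨?_, ?_, ?_, ?_⟩, ?_, h1, h2, h3, ?_, ?_⟩
  · intro x; simp [dself]
  · intro x y h
    have h0 : d x y = 0 := by exact_mod_cast h
    have hc := dmem x y
    rw [h0] at hc
    generalize hn : 0 = n at hc
    cases hc with
    | nil => rfl
    | @snoc n _ y' _ h =>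
      have := hpos y' y
      omega
  · intro x y; simp only [dsymm x y]
  · intro x y z; exact_mod_cast dtri x y z
  · intro r _
    obtain ⟨N, hN⟩ := ball_bound μ hbv' hfin hpos ⌊r⌋₊
    refine ⟨N, fun x => ?_⟩
    have hsub : {y : X | (d x y : ℝ) ≤ r} ⊆ {y | ∃ k ≤ ⌊r⌋₊, Chain μ k x y} := fun y hy =>
      ⟨d x y, Nat.le_floor hy, dmem x y⟩
    exact ⟨(hN x).1.subset hsub, (Set.ncard_le_ncard hsub (hN x).1).trans (hN x).2⟩
  · refine ⟨fun t => (φ K : ℝ) * t, fun s t hst => ?_, fun a a' b b' c c' => ?_⟩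
    · exact mul_le_mul_of_nonneg_left hst (Nat.cast_nonneg _)
    · have k1 := lip b c a a'
      have k2 := lip a' c b b'
      rw [h3 b a' c, h3 b' a' c] at k2
      have k3 := lip a' b' c c'
      rw [h3 c a' b', h2 a' c b', h3 c' a' b', h2 a' c' b'] at k3
      have t1 := dtri (μ a b c) (μ a' b c) (μ a' b' c')
      have t2 := dtri (μ a' b c) (μ a' b' c) (μ a' b' c')
      have : d (μ a b c) (μ a' b' c') ≤ φ K * (d a a' + d b b' + d c c') := by
        rw [mul_add, mul_add]; omega
      beta_reduce
      exact_mod_cast this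
  · refine ⟨K, Nat.cast_nonneg _, fun a b c e => ?_⟩
    have := hK a b c b e
    have e1 : μ a b b = b := by rw [h3, h2, h1]
    rw [e1] at this
    have k := (dle (Chain.single μ _ _)).trans this
    rw [dsymm] at k
    beta_reduce
    exact_mod_cast k

end Backward

end MedAux


/-- a bounded valency ternary algebra admits a metric making it a
bounded geometry coarse median space if and only if it is a coarse median
algebra (finite intervals, (M1), (M2) and the coarse five-point condition
(M3)'). -/
theorem stmt17 {X : Type*} (μ : X → X → X → X) (hbv : BoundedValency μ) :
    (∃ D : X → X → ℝ, IsMetricD D ∧ BoundedGeometryWith D ∧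
      IsCoarseMedianSpaceWith D μ) ↔
    ((∀ a b : X, (cmInterval μ a b).Finite) ∧
     (∀ a b : X, μ a a b = a) ∧
     (∀ a b c : X, μ a b c = μ a c b) ∧
     (∀ a b c : X, μ a b c = μ b a c) ∧
     (∃ K : ℕ, ∀ a b c d e : X,
       (cmInterval μ (μ a b (μ c d e)) (μ (μ a b c) (μ a b d) e)).ncard ≤ K)) := by
  constructor
  · rintro ⟨D, hD, hb, hm⟩
    obtain ⟨C, hC⟩ := MedAux.coarse_five D hD μ hm
    obtain ⟨N, hN⟩ := MedAux.interval_bound D hD hb μ hm C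
    refine ⟨fun a b => ?_, hm.1, hm.2.1, hm.2.2.1, N, fun a b c d e => (hN _ _ (hC a b c d e)).2⟩
    obtain ⟨N', hN'⟩ := MedAux.interval_bound D hD hb μ hm (D a b)
    exact (hN' a b le_rfl).1
  · rintro ⟨hfin, h1, h2, h3, K, hK⟩
    exact MedAux.backward μ hbv hfin h1 h2 h3 K hK
end

section
/- Let (X,ν) be a ternary algebra satisfying (T1) ν(a,a,x) = ν(a,x,a) = a for all a,x, (T2) ν(a,x,b) = ν(b,x,a) for all a,x,b, and the finite interval chain condition. Then (X,ν) has bounded valency if and only if the induced metric d_ν has bounded geometry. -/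
theorem two_le_interval {X : Type*} (ν : X → X → X → X)
    (T1 : ∀ a x : X, ν a a x = a ∧ ν a x a = a)
    (T2 : ∀ a x b : X, ν a x b = ν b x a) (a b : X) (hab : a ≠ b)
    (hf : (cmInterval ν a b).Finite) : 2 ≤ (cmInterval ν a b).ncard := by
  have h1 : a ∈ cmInterval ν a b := ⟨a, (T1 a b).1.symm⟩
  have h2 : b ∈ cmInterval ν a b := ⟨b, by rw [T2, (T1 b a).1]⟩
  rw [← Set.ncard_pair hab]
  exact Set.ncard_le_ncard (by rintro c (rfl | rfl) <;> assumption) hf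

theorem chain_step {X : Type*} (ν : X → X → X → X)
    (T1 : ∀ a x : X, ν a a x = a ∧ ν a x a = a)
    (T2 : ∀ a x b : X, ν a x b = ν b x a) (y : X) (l : List X) :
    ∀ x : X, (x :: l).getLast? = some y → FiniteIntervalChain ν (x :: l) →
      x = y ∨ ∃ (z : X) (l' : List X), (z :: l').getLast? = some y ∧
        FiniteIntervalChain ν (z :: l') ∧ (cmInterval ν x z).Finite ∧
        (cmInterval ν x z).ncard ≤ chainCost ν (x :: l) + 1 ∧
        chainCost ν (z :: l') + 1 ≤ chainCost ν (x :: l) := by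
  induction l with
  | nil =>
    intro x h _
    left
    simpa using h
  | cons w l ih =>
    intro x h hf
    have h' : (w :: l).getLast? = some y := by simpa using h
    have hf' : FiniteIntervalChain ν (w :: l) := by
      intro p hp
      exact hf p (by simpa using Or.inr hp)
    have hxw : (cmInterval ν x w).Finite := hf (x, w) (by simp)
    have hc : chainCost ν (x :: w :: l) =
      ((cmInterval ν x w).ncard - 1) + chainCost ν (w :: l) := rfl
    by_cases e : x = w
    · subst e
      rcases ih x h' hf' with r | ⟨z, l', a1, a2, a3, a4, a5⟩
      · exact Or.inl r
      · exact Or.inr ⟨z, l', a1, a2, a3, by omega, by omega⟩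
    · have := two_le_interval ν T1 T2 x w e hxw
      exact Or.inr ⟨w, l, h', hf', hxw, by omega, by omega⟩

theorem ball_cover {X : Type*} (ν : X → X → X → X)
    (T1 : ∀ a x : X, ν a a x = a ∧ ν a x a = a)
    (T2 : ∀ a x b : X, ν a x b = ν b x a) (hV : BoundedValency ν) (r : ℕ) :
    ∃ N : ℕ, ∀ x : X, ∃ s : Finset X, s.card ≤ N ∧ ∀ (y : X) (l : List X),
      (x :: l).getLast? = some y → FiniteIntervalChain ν (x :: l) →
      chainCost ν (x :: l) ≤ r → y ∈ s := by
  classical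
  obtain ⟨φ, hφ⟩ := hV
  induction r with
  | zero =>
    refine ⟨1, fun x => ⟨{x}, by simp, fun y l h1 h2 h3 => ?_⟩⟩
    rcases chain_step ν T1 T2 y l x h1 h2 with h | ⟨z, l', a1, a2, a3, a4, a5⟩
    · simp [h]
    · omega
  | succ r ih =>
    obtain ⟨N, hN⟩ := ih
    choose s hs hs' using hN
    refine ⟨φ (r + 2) * N + 1, fun x => ?_⟩
    obtain ⟨hF, hC⟩ := hφ x (r + 2)
    rw [Set.ncard_eq_toFinset_card _ hF] at hC
    refine ⟨insert x (hF.toFinset.biUnion s), ?_, fun y l h1 h2 h3 => ?_⟩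
    · refine (Finset.card_insert_le _ _).trans (Nat.add_le_add_right ?_ 1)
      exact (Finset.card_biUnion_le_card_mul _ _ N fun z _ => hs z).trans
        (Nat.mul_le_mul_right _ hC)
    · rcases chain_step ν T1 T2 y l x h1 h2 with h | ⟨z, l', a1, a2, a3, a4, a5⟩
      · simp [h]
      · refine Finset.mem_insert_of_mem (Finset.mem_biUnion.2 ⟨z, ?_, ?_⟩)
        · rw [Set.Finite.mem_toFinset]
          exact ⟨a3, by omega⟩
        · exact hs' z y l' a1 a2 (by omega)

/-- for a ternary algebra satisfying (T1), (T2) and the finite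
interval chain condition, bounded valency is equivalent to the induced metric
`d_ν` having bounded geometry. -/
theorem stmt18 {X : Type*} (ν : X → X → X → X)
    (T1 : ∀ a x : X, ν a a x = a ∧ ν a x a = a)
    (T2 : ∀ a x b : X, ν a x b = ν b x a)
    -- finite interval chain condition:
    (ficc : ∀ a b : X, ∃ l : List X, IsChainFrom a b l ∧ FiniteIntervalChain ν l) :
    BoundedValency ν ↔
    (∀ r : ℕ, ∃ N : ℕ, ∀ x : X,
      {y : X | inducedDist ν x y ≤ r}.Finite ∧
      {y : X | inducedDist ν x y ≤ r}.ncard ≤ N) := by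
  constructor
  · intro hV r
    obtain ⟨N, hN⟩ := ball_cover ν T1 T2 hV r
    refine ⟨N, fun x => ?_⟩
    obtain ⟨s, hs, hs'⟩ := hN x
    have hsub : {y : X | inducedDist ν x y ≤ r} ⊆ (s : Set X) := by
      intro y hy
      obtain ⟨l₀, hl₀, hl₀'⟩ := ficc x y
      have hne : {m : ℕ | ∃ l : List X, IsChainFrom x y l ∧ FiniteIntervalChain ν l ∧
          chainCost ν l = m}.Nonempty := ⟨_, l₀, hl₀, hl₀', rfl⟩
      obtain ⟨l, ⟨h1, h2⟩, h3, h4⟩ := Nat.sInf_mem hne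
      have h5 : chainCost ν l ≤ r := h4.le.trans hy
      cases l with
      | nil => simp at h1
      | cons w l =>
        obtain rfl : w = x := by simpa using h1
        exact hs' y l h2 h3 h5
    refine ⟨s.finite_toSet.subset hsub, ?_⟩
    have := Set.ncard_le_ncard hsub s.finite_toSet
    rw [Set.ncard_coe_finset] at this
    exact this.trans hs
  · intro h
    choose N hN using h
    refine ⟨N, fun x R => ?_⟩
    obtain ⟨hF, hC⟩ := hN R x
    have hsub : {y : X | (cmInterval ν x y).Finite ∧ (cmInterval ν x y).ncard ≤ R} ⊆
        {y : X | inducedDist ν x y ≤ R} := by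
      rintro y ⟨h1, h2⟩
      have : inducedDist ν x y ≤ chainCost ν [x, y] := by
        refine Nat.sInf_le ⟨[x, y], ⟨by simp, by simp⟩, ?_, rfl⟩
        intro p hp
        obtain rfl : p = (x, y) := by simpa using hp
        exact h1
      have h3 : chainCost ν [x, y] = (cmInterval ν x y).ncard - 1 := rfl
      show inducedDist ν x y ≤ R
      omega
    exact ⟨hF.subset hsub, (Set.ncard_le_ncard hsub hF).trans hC⟩
end

section
/- Let (X,ν) be a ternary algebra satisfying (T1) ν(a,a,x) = ν(a,x,a) = a, (T2) ν(a,x,b) = ν(b,x,a), and the finite interval chain condition, and let d_ν be the induced metric. Then the metric d_ν is quasi-geodesic if and only if the ternary algebra (X,ν) is quasi-geodesic, i.e. there exist constants L, C > 0 such that for any a,b ∈ X there is a chain a = y₀, y₁, …, y_n = b with card [y_j, y_{j+1}] ≤ C + 1 for each j and n ≤ L · card [a,b]. -/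
theorem chain_ind19 {X : Type*} (b : X) (P : X → List X → Prop) (h0 : P b [b])
    (h1 : ∀ x y r, IsChainFrom y b (y :: r) → P y (y :: r) → P x (x :: y :: r)) :
    ∀ (l : List X) (a : X), IsChainFrom a b l → P a l := by
  intro l
  induction l with
  | nil => intro a h; simp [IsChainFrom] at h
  | cons x t ih =>
    intro a h
    cases t with
    | nil =>
      obtain ⟨h2, h3⟩ := h
      simp at h2 h3
      subst h2; subst h3
      exact h0
    | cons y r =>
      obtain ⟨h2, h3⟩ := h
      simp at h2
      subst h2
      have hc : IsChainFrom y b (y :: r) := ⟨by simp, by simpa using h3⟩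
      exact h1 _ _ _ hc (ih y hc)

theorem fic_cons19 {X : Type*} (μ : X → X → X → X) (x y : X) (r : List X) :
    FiniteIntervalChain μ (x :: y :: r) ↔
      (cmInterval μ x y).Finite ∧ FiniteIntervalChain μ (y :: r) := by
  simp [FiniteIntervalChain]

theorem dist_le19 {X : Type*} (μ : X → X → X → X) {a b : X} {l : List X}
    (h : IsChainFrom a b l) (h' : FiniteIntervalChain μ l) :
    inducedDist μ a b ≤ chainCost μ l := Nat.sInf_le ⟨l, h, h', rfl⟩

theorem dist_self19 {X : Type*} (μ : X → X → X → X) (a : X) : inducedDist μ a a = 0 := by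
  have := dist_le19 μ (a := a) (b := a) (l := [a]) (by simp [IsChainFrom])
    (by simp [FiniteIntervalChain])
  simpa [chainCost] using this

theorem dist_exists19 {X : Type*} (μ : X → X → X → X)
    (ficc : ∀ a b : X, ∃ l : List X, IsChainFrom a b l ∧ FiniteIntervalChain μ l) (a b : X) :
    ∃ l, IsChainFrom a b l ∧ FiniteIntervalChain μ l ∧ chainCost μ l = inducedDist μ a b := by
  obtain ⟨l, h1, h2⟩ := ficc a b
  exact Nat.sInf_mem (s := {m : ℕ | ∃ l : List X,
    IsChainFrom a b l ∧ FiniteIntervalChain μ l ∧ chainCost μ l = m}) ⟨_, l, h1, h2, rfl⟩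

theorem dist_step19 {X : Type*} (μ : X → X → X → X)
    (ficc : ∀ a b : X, ∃ l : List X, IsChainFrom a b l ∧ FiniteIntervalChain μ l) (x y c : X)
    (hf : (cmInterval μ x y).Finite) :
    inducedDist μ x c ≤ ((cmInterval μ x y).ncard - 1) + inducedDist μ y c := by
  obtain ⟨l, h1, h2, h3⟩ := dist_exists19 μ ficc y c
  rw [← h3]
  match l, h1, h2 with
  | z :: r, h1, h2 =>
    obtain ⟨h4, h5⟩ := h1
    simp at h4
    subst h4
    exact dist_le19 μ (l := x :: z :: r) ⟨by simp, by simpa using h5⟩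
      ((fic_cons19 _ _ _ _).2 ⟨hf, h2⟩)
  | [], h1, _ => simp [IsChainFrom] at h1

/-- The graph whose edges are the intervals with at most `C+1` points. -/
def graph19 {X : Type*} (ν : X → X → X → X) (T2 : ∀ a x b : X, ν a x b = ν b x a) (C : ℝ) :
    SimpleGraph X where
  Adj x y := x ≠ y ∧ (cmInterval ν x y).Finite ∧ ((cmInterval ν x y).ncard : ℝ) ≤ C + 1
  symm := ⟨by
    intro x y h
    have : cmInterval ν y x = cmInterval ν x y := by
      ext c; simp [cmInterval, T2 x _ y]
    rw [this]
    exact ⟨h.1.symm, h.2⟩⟩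
  loopless := ⟨fun x h => h.1 rfl⟩

theorem card_ge19 {X : Type*} (ν : X → X → X → X)
    (T1 : ∀ a x : X, ν a a x = a ∧ ν a x a = a)
    (T2 : ∀ a x b : X, ν a x b = ν b x a) {a b : X} (hab : a ≠ b)
    (hf : (cmInterval ν a b).Finite) : 2 ≤ (cmInterval ν a b).ncard := by
  rw [← Set.ncard_pair hab]
  apply Set.ncard_le_ncard _ hf
  intro c hc
  rcases hc with rfl | rfl
  · exact ⟨c, ((T1 c b).1).symm⟩
  · exact ⟨c, by rw [T2]; exact ((T1 c a).1).symm⟩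

/-- A cheap chain gives a short walk. -/
theorem walk_of_cost19 {X : Type*} (ν : X → X → X → X)
    (T1 : ∀ a x : X, ν a a x = a ∧ ν a x a = a)
    (T2 : ∀ a x b : X, ν a x b = ν b x a) (M : ℝ) (b : X) :
    ∀ (l : List X) (a : X), IsChainFrom a b l → FiniteIntervalChain ν l →
      (chainCost ν l : ℝ) ≤ M → ∃ p : (graph19 ν T2 M).Walk a b, p.length ≤ chainCost ν l := by
  apply chain_ind19
  · intro _ _
    exact ⟨.nil, by simp⟩
  · intro x y r _ ih hf hM
    rw [fic_cons19] at hf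
    simp only [chainCost] at hM ⊢
    push_cast at hM
    obtain ⟨p, hp⟩ := ih hf.2 (by
      have : (0 : ℝ) ≤ (((cmInterval ν x y).ncard - 1 : ℕ) : ℝ) := Nat.cast_nonneg _
      linarith)
    by_cases hxy : x = y
    · subst hxy
      exact ⟨p, by omega⟩
    · have h2 := card_ge19 ν T1 T2 hxy hf.1
      have hadj : (graph19 ν T2 M).Adj x y := by
        refine ⟨hxy, hf.1, ?_⟩
        have : (0 : ℝ) ≤ (chainCost ν (y :: r) : ℝ) := Nat.cast_nonneg _
        rw [Nat.cast_sub (by omega)] at hM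
        push_cast at hM
        linarith
      exact ⟨.cons hadj p, by rw [SimpleGraph.Walk.length_cons]; omega⟩

/-- A chain with bounded intervals gives a walk. -/
theorem walk_of_chain19 {X : Type*} (ν : X → X → X → X)
    (T2 : ∀ a x b : X, ν a x b = ν b x a) (C : ℝ) (b : X) :
    ∀ (l : List X) (a : X), IsChainFrom a b l →
      (∀ p ∈ l.zip l.tail, (cmInterval ν p.1 p.2).Finite ∧
        ((cmInterval ν p.1 p.2).ncard : ℝ) ≤ C + 1) →
      ∃ p : (graph19 ν T2 C).Walk a b, p.length + 1 ≤ l.length := by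
  apply chain_ind19
  · intro _
    exact ⟨.nil, by simp⟩
  · intro x y r _ ih hf
    obtain ⟨p, hp⟩ := ih (fun q hq => hf q (by
      simp only [List.tail_cons, List.zip_cons_cons, List.mem_cons] at hq ⊢
      exact Or.inr hq))
    have h1 := hf (x, y) (by simp)
    by_cases hxy : x = y
    · subst hxy
      exact ⟨p, by simp at hp ⊢; omega⟩
    · have hadj : (graph19 ν T2 C).Adj x y := ⟨hxy, h1⟩
      exact ⟨.cons hadj p, by simp at hp ⊢; omega⟩

theorem chain_of_walk19 {X : Type*} (ν : X → X → X → X)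
    (T2 : ∀ a x b : X, ν a x b = ν b x a) (C : ℝ) {a b : X} (p : (graph19 ν T2 C).Walk a b) :
    ∃ l : List X, IsChainFrom a b (a :: l) ∧
      (∀ p ∈ (a :: l).zip l, (cmInterval ν p.1 p.2).Finite ∧
        ((cmInterval ν p.1 p.2).ncard : ℝ) ≤ C + 1) ∧ l.length = p.length := by
  induction p with
  | nil => exact ⟨[], by simp [IsChainFrom]⟩
  | @cons u v w h p ih =>
    obtain ⟨l, h1, h2, h3⟩ := ih
    refine ⟨v :: l, ⟨by simp, by simpa using h1.2⟩, ?_, by simp [h3]⟩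
    intro q hq
    rw [List.zip_cons_cons, List.mem_cons] at hq
    rcases hq with rfl | hq
    · exact h.2
    · exact h2 q hq

theorem dist_le_walk19 {X : Type*} (ν : X → X → X → X)
    (T2 : ∀ a x b : X, ν a x b = ν b x a)
    (ficc : ∀ a b : X, ∃ l : List X, IsChainFrom a b l ∧ FiniteIntervalChain ν l)
    (C : ℝ) (hC : 0 < C) {a b : X} (p : (graph19 ν T2 C).Walk a b) :
    (inducedDist ν a b : ℝ) ≤ C * p.length := by
  induction p with
  | nil => simp [dist_self19]
  | @cons u v w h p ih =>
    have h1 : (inducedDist ν u w : ℝ) ≤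
        (((cmInterval ν u v).ncard - 1 : ℕ) : ℝ) + inducedDist ν v w := by
      exact_mod_cast dist_step19 ν ficc u v w h.2.1
    have h2 : (((cmInterval ν u v).ncard - 1 : ℕ) : ℝ) ≤ C := by
      have := h.2.2
      rcases Nat.eq_zero_or_pos (cmInterval ν u v).ncard with h0 | h0
      · rw [h0]; simpa using hC.le
      · rw [Nat.cast_sub h0]; push_cast; linarith
    rw [SimpleGraph.Walk.length_cons]; push_cast
    linarith

theorem gdist_le_cost19 {X : Type*} (ν : X → X → X → X) (G : SimpleGraph X)
    (hG : G.Connected) (K : ℝ)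
    (hK : ∀ x y, (cmInterval ν x y).Finite →
      (G.dist x y : ℝ) ≤ K * (((cmInterval ν x y).ncard - 1 : ℕ) : ℝ)) (b : X) :
    ∀ (l : List X) (a : X), IsChainFrom a b l → FiniteIntervalChain ν l →
      (G.dist a b : ℝ) ≤ K * chainCost ν l := by
  apply chain_ind19
  · intro _; simp [chainCost]
  · intro x y r _ ih hf
    rw [fic_cons19] at hf
    have h1 := ih hf.2
    have h2 := hK x y hf.1
    have h3 : (G.dist x b : ℝ) ≤ G.dist x y + G.dist y b := by
      exact_mod_cast hG.dist_triangle
    simp only [chainCost]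
    push_cast
    linarith

theorem getVert_dist19 {X : Type*} (G : SimpleGraph X) (hG : G.Connected) {a b : X}
    (p : G.Walk a b) (i k : ℕ) (h : i + k ≤ p.length) :
    G.dist (p.getVert i) (p.getVert (i + k)) ≤ k := by
  induction k with
  | zero => simp
  | succ k ih =>
    have h1 := ih (by omega)
    have h2 : G.dist (p.getVert (i + k)) (p.getVert (i + k + 1)) = 1 :=
      SimpleGraph.dist_eq_one_iff_adj.2 (p.adj_getVert_succ (by omega))
    have h3 := hG.dist_triangle (u := p.getVert i) (v := p.getVert (i + k))
      (w := p.getVert (i + k + 1))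
    rw [← add_assoc]
    omega

theorem getVert_geod19 {X : Type*} (G : SimpleGraph X) (hG : G.Connected) {a b : X}
    (p : G.Walk a b) (hp : p.length = G.dist a b) (i j : ℕ) (hi : i ≤ p.length)
    (hj : j ≤ p.length) :
    (G.dist (p.getVert i) (p.getVert j) : ℝ) = |(i : ℝ) - j| := by
  wlog hij : i ≤ j generalizing i j
  · rw [SimpleGraph.dist_comm, abs_sub_comm]
    exact this j i hj hi (by omega)
  have h1 := getVert_dist19 G hG p 0 i (by omega)
  have h2 := getVert_dist19 G hG p i (j - i) (by omega)
  have h3 := getVert_dist19 G hG p j (p.length - j) (by omega)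
  have e1 : i + (j - i) = j := by omega
  have e2 : j + (p.length - j) = p.length := by omega
  rw [e1] at h2
  rw [e2, SimpleGraph.Walk.getVert_length] at h3
  rw [zero_add, SimpleGraph.Walk.getVert_zero] at h1
  have t1 := hG.dist_triangle (u := a) (v := p.getVert i) (w := b)
  have t2 := hG.dist_triangle (u := p.getVert i) (v := p.getVert j) (w := b)
  have : G.dist (p.getVert i) (p.getVert j) = j - i := by omega
  rw [this, Nat.cast_sub hij, abs_sub_comm, abs_of_nonneg]
  have : (i : ℝ) ≤ j := by exact_mod_cast hij
  linarith

theorem floor_diff19 {u v : ℝ} (hu : 0 ≤ u) (hv : 0 ≤ v) :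
    |((⌊u⌋₊ : ℕ) : ℝ) - (⌊v⌋₊ : ℕ)| ≤ |u - v| + 1 ∧
    |u - v| - 1 ≤ |((⌊u⌋₊ : ℕ) : ℝ) - (⌊v⌋₊ : ℕ)| := by
  have h1 := Nat.floor_le hu
  have h2 := Nat.floor_le hv
  have h3 := Nat.lt_floor_add_one u
  have h4 := Nat.lt_floor_add_one v
  constructor
  · rw [abs_le]
    have := neg_abs_le (u - v)
    have := le_abs_self (u - v)
    constructor <;> linarith
  · rw [sub_le_iff_le_add, abs_le]
    have := neg_abs_le ((⌊u⌋₊ : ℝ) - (⌊v⌋₊ : ℝ))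
    have := le_abs_self ((⌊u⌋₊ : ℝ) - (⌊v⌋₊ : ℝ))
    constructor <;> linarith

/-- for a ternary algebra satisfying (T1), (T2) and the finite
interval chain condition, the induced metric `d_ν` is quasi-geodesic (in the
integer-valued sense) if and only if the ternary algebra is quasi-geodesic:
there are `L, C > 0` such that any `a, b` are joined by a chain of `n ≤
L·card [a,b]` steps whose consecutive intervals have at most `C+1` points. -/
theorem stmt19 {X : Type*} (ν : X → X → X → X)
    (T1 : ∀ a x : X, ν a a x = a ∧ ν a x a = a)
    (T2 : ∀ a x b : X, ν a x b = ν b x a)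
    -- finite interval chain condition:
    (ficc : ∀ a b : X, ∃ l : List X, IsChainFrom a b l ∧ FiniteIntervalChain ν l) :
    -- the induced metric d_ν is quasi-geodesic:
    (∃ L C : ℝ, 0 < L ∧ 0 < C ∧ ∀ a b : X, ∃ γ : ℕ → X,
      γ 0 = a ∧ γ (inducedDist ν a b) = b ∧
      ∀ s t : ℕ, s ≤ inducedDist ν a b → t ≤ inducedDist ν a b →
        L⁻¹ * |(s : ℝ) - (t : ℝ)| - C ≤ (inducedDist ν (γ s) (γ t) : ℝ) ∧
        (inducedDist ν (γ s) (γ t) : ℝ) ≤ L * |(s : ℝ) - (t : ℝ)| + C) ↔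
    -- the ternary algebra (X,ν) is quasi-geodesic:
    (∃ L C : ℝ, 0 < L ∧ 0 < C ∧ ∀ a b : X, ∃ l : List X,
      IsChainFrom a b l ∧
      (∀ p ∈ l.zip l.tail, (cmInterval ν p.1 p.2).Finite ∧
        ((cmInterval ν p.1 p.2).ncard : ℝ) ≤ C + 1) ∧
      ((cmInterval ν a b).Infinite ∨
        ((l.length : ℝ) - 1 ≤ L * ((cmInterval ν a b).ncard : ℝ)))) := by
  constructor
  · rintro ⟨L, C, hL, hC, h⟩
    refine ⟨L + C, L + C, by linarith, by linarith, fun a b => ?_⟩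
    obtain ⟨γ, h0, h1, h2⟩ := h a b
    have hw : ∀ n, n ≤ inducedDist ν a b →
        ∃ p : (graph19 ν T2 (L + C)).Walk a (γ n), (p.length : ℝ) ≤ (L + C) * n := by
      intro n
      induction n with
      | zero => intro _; rw [h0]; exact ⟨.nil, by simp⟩
      | succ n ih =>
        intro hn
        obtain ⟨p, hp⟩ := ih (by omega)
        have h3 := (h2 n (n + 1) (by omega) hn).2
        obtain ⟨l, hl1, hl2, hl3⟩ := dist_exists19 ν ficc (γ n) (γ (n + 1))
        have h4 : (chainCost ν l : ℝ) ≤ L + C := by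
          rw [hl3]
          push_cast at h3
          simpa using h3
        obtain ⟨q, hq⟩ := walk_of_cost19 ν T1 T2 (L + C) _ l _ hl1 hl2 h4
        refine ⟨p.append q, ?_⟩
        have hq' : (q.length : ℝ) ≤ chainCost ν l := by exact_mod_cast hq
        rw [SimpleGraph.Walk.length_append]
        push_cast
        linarith
    have hw' := hw _ le_rfl
    rw [h1] at hw'
    obtain ⟨p, hp⟩ := hw'
    obtain ⟨l, hl1, hl2, hl3⟩ := chain_of_walk19 ν T2 (L + C) p
    refine ⟨a :: l, hl1, hl2, ?_⟩
    by_cases hf : (cmInterval ν a b).Finite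
    · right
      have h5 : (inducedDist ν a b : ℝ) ≤ (cmInterval ν a b).ncard := by
        have := dist_step19 ν ficc a b b hf
        rw [dist_self19] at this
        exact_mod_cast this.trans (by omega)
      have h6 := mul_le_mul_of_nonneg_left h5 (by linarith : 0 ≤ L + C)
      rw [List.length_cons, hl3]
      push_cast
      linarith
    · exact Or.inl hf
  · rintro ⟨L, C, hL, hC, h⟩
    set G := graph19 ν T2 C with hGdef
    by_cases hne : Nonempty X
    swap
    · exact ⟨1, 1, one_pos, one_pos, fun a => (hne ⟨a⟩).elim⟩
    have hG : G.Connected := by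
      refine ⟨fun a b => ?_⟩
      obtain ⟨l, h1, h2, _⟩ := h a b
      exact (walk_of_chain19 ν T2 C b l a h1 h2).choose.reachable
    have hK0 : 0 < 2 * L := by linarith
    have hK : ∀ x y, (cmInterval ν x y).Finite →
        (G.dist x y : ℝ) ≤ (2 * L) * (((cmInterval ν x y).ncard - 1 : ℕ) : ℝ) := by
      intro x y hf
      by_cases hxy : x = y
      · subst hxy; simp; positivity
      obtain ⟨l, h1, h2, h3⟩ := h x y
      replace h3 := h3.resolve_left (fun hi => hi hf)
      obtain ⟨p, hp⟩ := walk_of_chain19 ν T2 C y l x h1 h2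
      have h4 : (G.dist x y : ℝ) ≤ p.length := by exact_mod_cast SimpleGraph.dist_le p
      have h5 : (p.length : ℝ) + 1 ≤ l.length := by exact_mod_cast hp
      have h6 := card_ge19 ν T1 T2 hxy hf
      have h7 : (2 : ℝ) ≤ (cmInterval ν x y).ncard := by exact_mod_cast h6
      rw [Nat.cast_sub (by omega)]
      push_cast
      nlinarith
    generalize 2 * L = K at hK hK0
    have hup : ∀ x y, (G.dist x y : ℝ) ≤ K * inducedDist ν x y := by
      intro x y
      obtain ⟨l, h1, h2, h3⟩ := dist_exists19 ν ficc x y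
      rw [← h3]
      exact gdist_le_cost19 ν G hG K hK y l x h1 h2
    have hlo : ∀ x y, (inducedDist ν x y : ℝ) ≤ C * G.dist x y := by
      intro x y
      obtain ⟨p, hp⟩ := hG.exists_walk_length_eq_dist x y
      rw [← hp]
      exact dist_le_walk19 ν T2 ficc C hC p
    refine ⟨C * K, C + K⁻¹, by positivity, by positivity, fun a b => ?_⟩
    obtain ⟨p, hp⟩ := hG.exists_walk_length_eq_dist a b
    have ha := hup a b
    have hb := hlo a b
    rw [← hp] at ha hb
    set d := inducedDist ν a b with hd
    by_cases hd0 : d = 0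
    · have hl : p.length = 0 := by
        rw [hd0] at ha
        simp at ha
        exact SimpleGraph.Walk.length_eq_zero_iff.2 ha
      have hab : a = b := SimpleGraph.Walk.eq_of_length_eq_zero hl
      refine ⟨fun _ => a, rfl, hab, fun s t hs ht => ?_⟩
      have hs' : s = 0 := by omega
      have ht' : t = 0 := by omega
      subst hs'; subst ht'
      rw [dist_self19]
      have : 0 < K⁻¹ := by positivity
      constructor <;> simp <;> linarith
    have hdp : (0 : ℝ) < d := by exact_mod_cast Nat.pos_of_ne_zero hd0
    set r : ℝ := p.length / d with hr
    have hr0 : 0 ≤ r := by positivity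
    have hrd : r * d = p.length := by rw [hr]; field_simp
    have hrK : r ≤ K := by rw [hr, div_le_iff₀ hdp]; exact ha
    have hrC : 1 ≤ C * r := by
      rw [← hrd] at hb
      by_contra hcon
      push Not at hcon
      nlinarith
    refine ⟨fun s => p.getVert ⌊(s : ℝ) * r⌋₊, by simp, ?_, fun s t hs ht => ?_⟩
    · show p.getVert ⌊(d : ℝ) * r⌋₊ = b
      rw [mul_comm, hrd]; simp
    · have hfl : ∀ s : ℕ, s ≤ d → ⌊(s : ℝ) * r⌋₊ ≤ p.length := by
        intro s hs
        apply Nat.floor_le_of_le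
        rw [← hrd, mul_comm]
        have : (s : ℝ) ≤ d := by exact_mod_cast hs
        gcongr
      have hg := getVert_geod19 G hG p hp _ _ (hfl s hs) (hfl t ht)
      obtain ⟨f1, f2⟩ := floor_diff19 (u := (s : ℝ) * r) (v := (t : ℝ) * r)
        (by positivity) (by positivity)
      rw [← hg, ← sub_mul, abs_mul, abs_of_nonneg hr0] at f1 f2
      have u1 := hup (p.getVert ⌊(s : ℝ) * r⌋₊) (p.getVert ⌊(t : ℝ) * r⌋₊)
      have u2 := hlo (p.getVert ⌊(s : ℝ) * r⌋₊) (p.getVert ⌊(t : ℝ) * r⌋₊)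
      have hz : 0 ≤ |(s : ℝ) - t| := abs_nonneg _
      have hKi : 0 < K⁻¹ := by positivity
      have hCi : 0 < C⁻¹ := by positivity
      generalize |(s : ℝ) - t| = z at *
      constructor
      · have hq : C⁻¹ ≤ r := by
          rw [inv_le_iff_one_le_mul₀ hC]; linarith
        have g1 : z * C⁻¹ - 1 ≤ K * inducedDist ν (p.getVert ⌊(s : ℝ) * r⌋₊)
            (p.getVert ⌊(t : ℝ) * r⌋₊) := by nlinarith
        have g2 := mul_le_mul_of_nonneg_left g1 hKi.le
        rw [inv_mul_cancel_left₀ hK0.ne'] at g2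
        rw [mul_inv]
        nlinarith
      · have g1 : z * r ≤ z * K := by gcongr
        have g2 := mul_le_mul_of_nonneg_left (f1.trans (add_le_add_left g1 1)) hC.le
        nlinarith
end
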